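/- arXiv:1407.4208 — 2 statements merged into one kernel-verified Lean document; each statement's English description precedes it below -/
import Mathlib

section
/- Let γ = (γ_j)_{j≥1} be non-increasing nonnegative weights such that ∑_{j≥1} γ_j^τ < ∞ for some real τ > 0, and let δ > 0. Then there exists a constant C > 0 (depending only on γ and δ, independent of p and s) such that for every prime p and every s ∈ ℕ the Korobov point set P_{p,s} satisfies D*_γ(P_{p,s}) ≤ C·s·p^{−(1/2−δ)}. -/
open Finset

/-- Local discrepancy of the point set `x` at the corner point `t`:
`Δ(t) = #{n : x_n ∈ [0,t)}/N − ∏_j t_j`. -/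
noncomputable def localDisc {N s : ℕ} (x : Fin N → Fin s → ℝ) (t : Fin s → ℝ) : ℝ :=
  ((univ.filter fun n => ∀ j, x n j < t j).card : ℝ) / N - ∏ j, t j

/-- `(z_u, 1)`: the vector `z` with all components whose index is not in `u`
replaced by `1`. -/
def projPoint {s : ℕ} (u : Finset (Fin s)) (z : Fin s → ℝ) : Fin s → ℝ :=
  fun j => if j ∈ u then z j else 1

/-- The weight `γ_u = ∏_{j ∈ u} γ_j` of a set of coordinates `u ⊆ {1,…,s}`;
coordinate `j : Fin s` carries weight `γ (j+1)` (weights are indexed from `1`). -/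
noncomputable def weightOf {s : ℕ} (γ : ℕ → ℝ) (u : Finset (Fin s)) : ℝ :=
  ∏ j ∈ u, γ (j.1 + 1)

/-- Weighted star-discrepancy
`D*_γ(x) = sup_{z ∈ [0,1]^s} max_{∅ ≠ u ⊆ [s]} γ_u |Δ(z_u,1)|`. -/
noncomputable def wStarDisc {N s : ℕ} (γ : ℕ → ℝ) (x : Fin N → Fin s → ℝ) : ℝ :=
  sSup {d : ℝ | ∃ z : Fin s → ℝ, (∀ j, z j ∈ Set.Icc (0:ℝ) 1) ∧
    ∃ u : Finset (Fin s), u.Nonempty ∧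
      d = weightOf γ u * |localDisc x (projPoint u z)|}

/-- `N`-th minimal weighted star-discrepancy `disc_γ(N,s)`. -/
noncomputable def wMinDisc (γ : ℕ → ℝ) (N s : ℕ) : ℝ :=
  sInf {d : ℝ | ∃ x : Fin N → Fin s → ℝ,
    (∀ n j, x n j ∈ Set.Ico (0:ℝ) 1) ∧ d = wStarDisc γ x}

/-- Korobov's `p`-set `P_{p,s}`: the points `x_n = ({n/p}, {n²/p}, …, {n^s/p})`
for `n = 0, 1, …, p−1`. -/
noncomputable def korobovP (p s : ℕ) : Fin p → Fin s → ℝ :=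
  fun n j => Int.fract ((n.1 : ℝ) ^ (j.1 + 1) / p)

/-- Korobov's `p²`-set `Q_{p²,s}`: the points `x_n = ({n/p²}, {n²/p²}, …, {n^s/p²})`
for `n = 0, 1, …, p²−1`. -/
noncomputable def korobovQ (p s : ℕ) : Fin (p ^ 2) → Fin s → ℝ :=
  fun n j => Int.fract ((n.1 : ℝ) ^ (j.1 + 1) / ((p : ℝ) ^ 2))

/-- The Hua–Wang multi-set `R_{p²,s}`: the `p²` points
`x_{a,k} = ({k/p}, {ak/p}, …, {a^{s−1}k/p})` for `a, k = 0, …, p−1`, counted with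
multiplicity; here the index `n < p²` encodes `a = n / p` and `k = n % p`. -/
noncomputable def huaWangR (p s : ℕ) : Fin (p ^ 2) → Fin s → ℝ :=
  fun n j => Int.fract (((n.1 / p : ℕ) : ℝ) ^ j.1 * ((n.1 % p : ℕ) : ℝ) / p)

/-!
Stepanov's method bounds the trace fibres `Tr (f x) = α` over every finite extension of the base
field `F`, where `q = #F`. Hence the power sums of the reciprocal roots of the `L`-polynomial
attached to `f` are `O(√q ^ n)`, which forces each of these roots to have modulus at most `√q`: this
is Weil's bound for the exponential sum of `f`.

Box indicators are expanded into products of trapezoids at dyadic scales. A trapezoid has bounded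
Wiener norm, so Weil's bound controls each product, and the expansion is truncated as soon as the
total mean falls to the order of `p ^ (-1/2)`. The error in the coordinates `u` is
`O(s * p ^ (-1/2 + δ) * D ^ #u)` with `D` depending only on `δ`, and weights tending to zero absorb
the factor `D ^ #u`.
-/

namespace Korobov

section Stepanov

lemma stepanov_dimension_count {q d m k : ℕ} (hq : 2 ≤ q) (hmk : m ≤ k) :
    q ^ (m + 1) * q ^ k + (q ^ m + (2 * d + 2)) + d * q ^ (m + 1) <
      (q ^ m + (2 * d + 2)) * q * q ^ k := by
  have hq_pos : 0 < q := two_pos.trans_le hq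
  have hm : 1 ≤ q ^ m := Nat.one_le_pow _ _ hq_pos
  have hm' : 2 * q ^ m ≤ q ^ (m + 1) := by rw [pow_succ']; gcongr
  have hmk : q ^ (m + 1) ≤ q ^ (k + 1) := Nat.pow_le_pow_right hq_pos (by omega)
  calc _ < q ^ (m + 1) * q ^ k + (2 * d + 2) * q ^ (m + 1) := by nlinarith
    _ ≤ q ^ (m + 1) * q ^ k + (2 * d + 2) * q ^ (k + 1) := by gcongr
    _ = _ := by ring

open Polynomial

variable {F : Type*} [Field F] [Fintype F] {f : F[X]}

local notation "q" => Fintype.card F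

lemma frobeniusAlgHom_pow_apply {K : Type*} [CommRing K] [Algebra F K] (n : ℕ) (x : K) :
    (FiniteField.frobeniusAlgHom F K ^ n) x = x ^ q ^ n := by
  rw [AlgHom.coe_pow, FiniteField.coe_frobeniusAlgHom, pow_iterate]

/-- The polynomial `f + f ^ q + ⋯ + f ^ q ^ (n - 1)` over the field with `q` elements. Its values
on the extension of degree `n` are the traces of the values of `f`. -/
noncomputable def partialTrace (f : F[X]) (n : ℕ) : F[X] :=
  ∑ i ∈ range n, f ^ q ^ i

lemma natDegree_ne_zero_of_coprime (hf : (q).Coprime f.natDegree) : f.natDegree ≠ 0 := by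
  intro h
  rw [h, Nat.coprime_zero_right] at hf
  exact Fintype.one_lt_card.ne' hf

lemma natDegree_partialTrace_succ (hf : f.natDegree ≠ 0) (n : ℕ) :
    (partialTrace f (n + 1)).natDegree = f.natDegree * q ^ n := by
  induction n with
  | zero => simp [partialTrace]
  | succ n ih =>
    have hlt : f.natDegree * q ^ n < f.natDegree * q ^ (n + 1) :=
      Nat.mul_lt_mul_of_pos_left
        (Nat.pow_lt_pow_right Fintype.one_lt_card n.lt_succ_self) (Nat.pos_of_ne_zero hf)
    have htop : (f ^ q ^ (n + 1)).natDegree = f.natDegree * q ^ (n + 1) := by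
      rw [natDegree_pow, mul_comm]
    rw [partialTrace, sum_range_succ, ← partialTrace,
      natDegree_add_eq_right_of_natDegree_lt (by rwa [ih, htop]), htop]

lemma partialTrace_succ_ne_zero (hf : f.natDegree ≠ 0) (n : ℕ) : partialTrace f (n + 1) ≠ 0 := by
  intro h
  have hdeg := natDegree_partialTrace_succ hf n
  rw [h, natDegree_zero] at hdeg
  exact mul_ne_zero hf (pow_ne_zero n Fintype.card_ne_zero) hdeg.symm

lemma natDegree_lt_of_mem_degreeLT {R : Type*} [Semiring R] {n : ℕ} (hn : n ≠ 0)
    (u : degreeLT R n) : (u : R[X]).natDegree < n := by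
  by_cases hu : (u : R[X]) = 0
  · rw [hu, natDegree_zero]
    exact Nat.pos_of_ne_zero hn
  · exact (natDegree_lt_iff_degree_lt hu).2 (mem_degreeLT.1 u.2)

/-- Stepanov's auxiliary polynomial, with coefficients `u` of degree less than `q ^ k`. -/
noncomputable def stepanovPoly (f : F[X]) (k : ℕ) {A : ℕ}
    (u : Fin A × Fin q → degreeLT F (q ^ k)) : F[X] :=
  ∑ ab, (u ab : F[X]) * (X ^ (ab.1.1 * q ^ (k + 1)) * partialTrace f (k + 1) ^ ab.2.1)

lemma natDegree_stepanovTerm_div (hf : f.natDegree ≠ 0) {k a b : ℕ} {c : F[X]} (hc : c ≠ 0)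
    (hcdeg : c.natDegree < q ^ k) :
    (c * (X ^ (a * q ^ (k + 1)) * partialTrace f (k + 1) ^ b)).natDegree / q ^ k =
      q * a + b * f.natDegree := by
  have hT := pow_ne_zero b (partialTrace_succ_ne_zero hf k)
  have hX : (X ^ (a * q ^ (k + 1)) : F[X]) ≠ 0 := pow_ne_zero _ X_ne_zero
  have hdeg : (c * (X ^ (a * q ^ (k + 1)) * partialTrace f (k + 1) ^ b)).natDegree =
      c.natDegree + (q * a + b * f.natDegree) * q ^ k := by
    rw [natDegree_mul hc (mul_ne_zero hX hT), natDegree_mul hX hT, natDegree_X_pow, natDegree_pow,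
      natDegree_partialTrace_succ hf]
    ring
  rw [hdeg, Nat.add_mul_div_right _ _ (pow_pos Fintype.card_pos k), Nat.div_eq_of_lt hcdeg,
    zero_add]

lemma mul_add_mul_injective_of_coprime {m d A : ℕ} (h : m.Coprime d) :
    Function.Injective fun ab : Fin A × Fin m => m * ab.1.1 + ab.2.1 * d := by
  intro x y hxy
  dsimp only at hxy
  have hmod : x.2.1 * d ≡ y.2.1 * d [MOD m] := by
    simpa [Nat.ModEq, Nat.mul_add_mod] using congrArg (· % m) hxy
  have hsnd : x.2.1 = y.2.1 :=
    (Nat.ModEq.cancel_right_of_coprime h hmod).eq_of_lt_of_lt x.2.2 y.2.2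
  rw [hsnd, Nat.add_right_cancel_iff] at hxy
  exact Prod.ext (Fin.ext (Nat.eq_of_mul_eq_mul_left x.2.pos hxy)) (Fin.ext hsnd)

lemma stepanovPoly_ne_zero (hf : (q).Coprime f.natDegree) {k A : ℕ}
    {u : Fin A × Fin q → degreeLT F (q ^ k)} (hu : u ≠ 0) : stepanovPoly f k u ≠ 0 := by
  have hd := natDegree_ne_zero_of_coprime hf
  set term : Fin A × Fin q → F[X] := fun ab =>
    (u ab : F[X]) * (X ^ (ab.1.1 * q ^ (k + 1)) * partialTrace f (k + 1) ^ ab.2.1)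
  have hdiv : ∀ ab, term ab ≠ 0 →
      (term ab).natDegree / q ^ k = q * ab.1.1 + ab.2.1 * f.natDegree := fun ab h =>
    natDegree_stepanovTerm_div hd (left_ne_zero_of_mul h)
      (natDegree_lt_of_mem_degreeLT (pow_ne_zero k Fintype.card_ne_zero) (u ab))
  have hdisjoint : Set.Pairwise {ab | ab ∈ univ ∧ term ab ≠ 0}
      (Function.onFun (· ≠ ·) (degree ∘ term)) := by
    intro a ha b hb hab hdeg
    refine hab (mul_add_mul_injective_of_coprime hf ?_)
    simp only [← hdiv a ha.2, ← hdiv b hb.2, natDegree_eq_of_degree_eq hdeg]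
  obtain ⟨ab, hab⟩ := Function.ne_iff.1 hu
  have hne : term ab ≠ 0 := mul_ne_zero (by simpa using hab)
    (mul_ne_zero (pow_ne_zero _ X_ne_zero) (pow_ne_zero _ (partialTrace_succ_ne_zero hd k)))
  intro hzero
  have hsup := degree_sum_eq_of_disjoint term univ hdisjoint
  rw [show ∑ x, term x = 0 from hzero, degree_zero] at hsup
  have hle := Finset.le_sup (f := fun i => (term i).degree) (mem_univ ab)
  rw [← hsup, le_bot_iff, degree_eq_bot] at hle
  exact hne hle

lemma natDegree_stepanovPoly_le (hf : f.natDegree ≠ 0) {k A : ℕ}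
    (u : Fin A × Fin q → degreeLT F (q ^ k)) :
    (stepanovPoly f k u).natDegree ≤ q ^ k + A * q ^ (k + 1) + f.natDegree * q ^ (k + 1) := by
  refine natDegree_sum_le_of_forall_le _ _ fun ab _ => ?_
  have hu := natDegree_lt_of_mem_degreeLT (pow_ne_zero k Fintype.card_ne_zero) (u ab)
  have hT : (partialTrace f (k + 1) ^ ab.2.1).natDegree ≤ f.natDegree * q ^ (k + 1) := calc
    _ ≤ ab.2.1 * (f.natDegree * q ^ k) := by
      rw [← natDegree_partialTrace_succ hf]; exact natDegree_pow_le
    _ ≤ q * (f.natDegree * q ^ k) := Nat.mul_le_mul_right _ ab.2.2.le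
    _ = f.natDegree * q ^ (k + 1) := by ring
  calc _ ≤ (u ab : F[X]).natDegree + (ab.1.1 * q ^ (k + 1) +
        (partialTrace f (k + 1) ^ ab.2.1).natDegree) := by
        refine natDegree_mul_le.trans (Nat.add_le_add_left (natDegree_mul_le.trans ?_) _)
        rw [natDegree_X_pow]
    _ ≤ q ^ k + (A * q ^ (k + 1) + f.natDegree * q ^ (k + 1)) := by
      gcongr
      exact ab.1.2.le
    _ = _ := by ring

/-- The `q ^ (m + 1)`-th power of `stepanovPoly f k u`, simplified at those points of the extension
of degree `(m + 1) + (k + 1)` where `f` has trace `α`. -/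
noncomputable def reducedStepanovPoly (f : F[X]) (α : F) (m k A : ℕ) :
    (Fin A × Fin q → degreeLT F (q ^ k)) →ₗ[F] F[X] :=
  ∑ ab : Fin A × Fin q,
    LinearMap.mulRight F (X ^ ab.1.1 * (C α - partialTrace f (m + 1)) ^ ab.2.1) ∘ₗ
      (expand F (q ^ (m + 1))).toLinearMap ∘ₗ (degreeLT F (q ^ k)).subtype ∘ₗ LinearMap.proj ab

lemma reducedStepanovPoly_apply (α : F) (m : ℕ) {k A : ℕ}
    (u : Fin A × Fin q → degreeLT F (q ^ k)) :
    reducedStepanovPoly f α m k A u = ∑ ab, expand F (q ^ (m + 1)) (u ab) *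
      (X ^ ab.1.1 * (C α - partialTrace f (m + 1)) ^ ab.2.1) := by
  simp [reducedStepanovPoly, mul_assoc]

lemma reducedStepanovPoly_mem_degreeLT (hf : f.natDegree ≠ 0) (α : F) (m : ℕ) {k A : ℕ}
    (u : Fin A × Fin q → degreeLT F (q ^ k)) :
    reducedStepanovPoly f α m k A u ∈
      degreeLT F (q ^ (m + 1) * q ^ k + A + f.natDegree * q ^ (m + 1)) := by
  rw [reducedStepanovPoly_apply]
  refine Submodule.sum_mem _ fun ab _ => mem_degreeLT.2 (degree_le_natDegree.trans_lt ?_)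
  rw [Nat.cast_lt]
  have hu := natDegree_lt_of_mem_degreeLT (pow_ne_zero k Fintype.card_ne_zero) (u ab)
  have hT : ((C α - partialTrace f (m + 1)) ^ ab.2.1).natDegree ≤ f.natDegree * q ^ (m + 1) := calc
    _ ≤ ab.2.1 * (C α - partialTrace f (m + 1)).natDegree := natDegree_pow_le
    _ = ab.2.1 * (f.natDegree * q ^ m) := by
      rw [natDegree_sub, natDegree_sub_C, natDegree_partialTrace_succ hf]
    _ ≤ q * (f.natDegree * q ^ m) := Nat.mul_le_mul_right _ ab.2.2.le
    _ = f.natDegree * q ^ (m + 1) := by ring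
  calc _ ≤ (u ab : F[X]).natDegree * q ^ (m + 1) + (ab.1.1 +
        ((C α - partialTrace f (m + 1)) ^ ab.2.1).natDegree) := by
        refine natDegree_mul_le.trans ?_
        rw [natDegree_expand]
        refine Nat.add_le_add_left (natDegree_mul_le.trans ?_) _
        rw [natDegree_X_pow]
    _ < q ^ k * q ^ (m + 1) + (A + f.natDegree * q ^ (m + 1)) := by
      refine add_lt_add_of_le_of_lt (Nat.mul_le_mul_right _ hu.le) ?_
      exact add_lt_add_of_lt_of_le ab.1.2 hT
    _ = _ := by ring

lemma exists_reducedStepanovPoly_eq_zero (hf : f.natDegree ≠ 0) (α : F) {m k A : ℕ}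
    (hA : q ^ (m + 1) * q ^ k + A + f.natDegree * q ^ (m + 1) < A * q * q ^ k) :
    ∃ u : Fin A × Fin q → degreeLT F (q ^ k), u ≠ 0 ∧ reducedStepanovPoly f α m k A u = 0 := by
  have hfinite (n : ℕ) : FiniteDimensional F (degreeLT F n) := .of_basis (degreeLT.basis F n)
  have hfinrank (n : ℕ) : Module.finrank F (degreeLT F n) = n := by
    rw [Module.finrank_eq_card_basis (degreeLT.basis F n), Fintype.card_fin]
  have hker : LinearMap.ker ((reducedStepanovPoly f α m k A).codRestrict _
      (reducedStepanovPoly_mem_degreeLT hf α m)) ≠ ⊥ := by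
    apply LinearMap.ker_ne_bot_of_finrank_lt
    simpa [hfinrank, Module.finrank_pi_fintype] using hA
  obtain ⟨u, hu, hu0⟩ := Submodule.exists_mem_ne_zero_of_ne_bot hker
  exact ⟨u, hu0, congrArg Subtype.val (LinearMap.mem_ker.1 hu)⟩

section Extension

variable {K : Type*} [Field K] [Algebra F K]

lemma aeval_partialTrace_add (f : F[X]) (m n : ℕ) (x : K) :
    aeval x (partialTrace f (m + n)) =
      aeval x (partialTrace f m) + aeval x (partialTrace f n) ^ q ^ m := by
  rw [← frobeniusAlgHom_pow_apply]
  simp [partialTrace, sum_range_add, frobeniusAlgHom_pow_apply, ← pow_mul, ← pow_add, add_comm]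

lemma algebraMap_trace_aeval [Finite K] (f : F[X]) (x : K) :
    algebraMap F K (Algebra.trace F K (aeval x f)) =
      aeval x (partialTrace f (Module.finrank F K)) := by
  simp [partialTrace, FiniteField.algebraMap_trace_eq_sum_pow, Nat.card_eq_fintype_card]

lemma aeval_stepanovPoly_pow [Finite K] {α : F} {m k A : ℕ}
    (u : Fin A × Fin q → degreeLT F (q ^ k)) (hK : Module.finrank F K = (m + 1) + (k + 1)) {x : K}
    (hx : Algebra.trace F K (aeval x f) = α) :
    aeval x (stepanovPoly f k u) ^ q ^ (m + 1) = aeval x (reducedStepanovPoly f α m k A u) := by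
  have hT : aeval (x ^ q ^ (m + 1)) (partialTrace f (k + 1)) =
      algebraMap F K α - aeval x (partialTrace f (m + 1)) := by
    rw [← frobeniusAlgHom_pow_apply, aeval_algHom_apply, frobeniusAlgHom_pow_apply, ← hx,
      algebraMap_trace_aeval, hK, aeval_partialTrace_add f (m + 1), add_sub_cancel_left]
  have := Fintype.ofFinite K
  have hxK : (x ^ q ^ (m + 1)) ^ q ^ (k + 1) = x := by
    rw [← pow_mul, ← pow_add, ← hK, ← Module.card_eq_pow_finrank, FiniteField.pow_card]
  rw [reducedStepanovPoly_apply, stepanovPoly, ← frobeniusAlgHom_pow_apply, map_sum, map_sum,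
    map_sum]
  refine sum_congr rfl fun ab _ => ?_
  simp only [map_mul, map_pow, map_sub, aeval_X, aeval_C, expand_aeval,
    ← aeval_algHom_apply, frobeniusAlgHom_pow_apply]
  rw [hT, mul_comm ab.1.1, pow_mul, hxK]

variable [Fintype K]

theorem card_trace_aeval_eq_le (hf : (q).Coprime f.natDegree) {m k : ℕ} (hmk : m ≤ k)
    (hK : Module.finrank F K = (m + 1) + (k + 1)) (α : F) [DecidableEq F] :
    #{x : K | Algebra.trace F K (aeval x f) = α} ≤
      q ^ (m + (k + 1)) + (3 * f.natDegree + 3) * q ^ (k + 1) := by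
  classical
  have hd := natDegree_ne_zero_of_coprime hf
  obtain ⟨u, hu, hred⟩ :=
    exists_reducedStepanovPoly_eq_zero hd α (stepanov_dimension_count Fintype.one_lt_card hmk)
  have hroot : ∀ x : K, Algebra.trace F K (aeval x f) = α → aeval x (stepanovPoly f k u) = 0 := by
    intro x hx
    have hpow := aeval_stepanovPoly_pow u hK hx
    rw [hred, map_zero] at hpow
    exact eq_zero_of_pow_eq_zero hpow
  have hsub : ({x : K | Algebra.trace F K (aeval x f) = α} : Finset K) ⊆
      ((stepanovPoly f k u).aroots K).toFinset := fun x hx =>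
    Multiset.mem_toFinset.2 (mem_aroots.2 ⟨stepanovPoly_ne_zero hf hu, hroot x (mem_filter.1 hx).2⟩)
  have hk : q ^ k ≤ q ^ (k + 1) := Nat.pow_le_pow_right Fintype.card_pos k.le_succ
  calc _ ≤ ((stepanovPoly f k u).aroots K).card :=
        (card_le_card hsub).trans (Multiset.toFinset_card_le _)
    _ ≤ (stepanovPoly f k u).natDegree := (card_roots' _).trans natDegree_map_le
    _ ≤ q ^ k + (q ^ m + (2 * f.natDegree + 2)) * q ^ (k + 1) + f.natDegree * q ^ (k + 1) :=
      natDegree_stepanovPoly_le hd u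
    _ ≤ q ^ (m + (k + 1)) + (3 * f.natDegree + 3) * q ^ (k + 1) := by rw [pow_add q m]; nlinarith

/- Since `∑ N = |G| M`, a one-sided bound on `N - M` controls its `ℓ¹`-norm. -/
lemma norm_sum_mul_addChar_le {G : Type*} [AddCommGroup G] [Fintype G] {ψ : AddChar G ℂ}
    (hψ : ψ ≠ 1) {N : G → ℝ} {M B : ℝ} (hB : 0 ≤ B) (hN : ∀ g, N g ≤ M + B)
    (hsum : ∑ g, N g = Fintype.card G * M) :
    ‖∑ g, (N g : ℂ) * ψ g‖ ≤ 2 * B * Fintype.card G := by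
  have hcentered : ∑ g, (N g : ℂ) * ψ g = ∑ g, ((N g - M : ℝ) : ℂ) * ψ g := by
    simp only [Complex.ofReal_sub, sub_mul, sum_sub_distrib, ← mul_sum,
      AddChar.sum_eq_zero_of_ne_one hψ, mul_zero, sub_zero]
  have habs (g : G) : |N g - M| ≤ 2 * B - (N g - M) := by
    rw [abs_le]
    constructor <;> linarith [hN g]
  calc _ ≤ ∑ g, ‖((N g - M : ℝ) : ℂ) * ψ g‖ := by rw [hcentered]; exact norm_sum_le _ _
    _ = ∑ g, |N g - M| := by
      simp only [norm_mul, AddChar.norm_apply, mul_one, Complex.norm_real, Real.norm_eq_abs]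
    _ ≤ ∑ g, (2 * B - (N g - M)) := sum_le_sum fun g _ => habs g
    _ = 2 * B * Fintype.card G := by
      rw [sum_sub_distrib, sum_sub_distrib, hsum]
      simp only [sum_const, card_univ, nsmul_eq_mul]
      ring

theorem norm_sum_addChar_trace_le (hf : (q).Coprime f.natDegree) {ψ : AddChar F ℂ} (hψ : ψ ≠ 1)
    (hK : 2 ≤ Module.finrank F K) :
    ‖∑ x : K, ψ (Algebra.trace F K (aeval x f))‖ ≤
      2 * q ^ 2 * (3 * f.natDegree + 3) * √q ^ Module.finrank F K := by
  classical
  obtain ⟨m, k, hmk, hkm, hν⟩ :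
      ∃ m k, m ≤ k ∧ k ≤ m + 1 ∧ Module.finrank F K = (m + 1) + (k + 1) :=
    ⟨Module.finrank F K / 2 - 1, Module.finrank F K - Module.finrank F K / 2 - 1, by omega,
      by omega, by omega⟩
  set N : F → ℕ := fun α => #{x : K | Algebra.trace F K (aeval x f) = α}
  have hsum : ∑ α, (N α : ℝ) = q * q ^ (m + (k + 1)) := by
    rw [← pow_succ', show m + (k + 1) + 1 = Module.finrank F K by omega]
    exact_mod_cast (card_eq_sum_card_fiberwise (s := (univ : Finset K)) (t := univ)
      (f := fun x => Algebra.trace F K (aeval x f)) (by simp)).symm.trans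
      (Module.card_eq_pow_finrank (K := F) (V := K))
  have hfiber : ∑ x : K, ψ (Algebra.trace F K (aeval x f)) = ∑ α, (((N α : ℕ) : ℝ) : ℂ) * ψ α := by
    rw [← sum_fiberwise univ fun x : K => Algebra.trace F K (aeval x f)]
    refine sum_congr rfl fun α _ => ?_
    rw [sum_congr rfl fun x hx => congrArg ψ (mem_filter.1 hx).2, sum_const, nsmul_eq_mul]
    norm_cast
  have hsqrt : (q : ℝ) ^ (k + 1) ≤ q * √q ^ Module.finrank F K := calc
    (q : ℝ) ^ (k + 1) = √q ^ (2 * (k + 1)) := by rw [pow_mul, Real.sq_sqrt (Nat.cast_nonneg _)]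
    _ ≤ √q ^ (2 + Module.finrank F K) := pow_le_pow_right₀
      (Real.one_le_sqrt.2 (by exact_mod_cast Fintype.card_pos)) (by omega)
    _ = q * √q ^ Module.finrank F K := by rw [pow_add, Real.sq_sqrt (Nat.cast_nonneg _)]
  calc _ ≤ 2 * ((3 * f.natDegree + 3) * (q : ℝ) ^ (k + 1)) * q := by
        rw [hfiber]
        exact norm_sum_mul_addChar_le hψ (by positivity)
          (fun α => by exact_mod_cast card_trace_aeval_eq_le hf hmk hν α) hsum
    _ ≤ 2 * ((3 * f.natDegree + 3) * (q * √q ^ Module.finrank F K)) * q := by gcongr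
    _ = _ := by ring

end Extension

end Stepanov

section PrimeSums

open Polynomial UniqueFactorizationMonoid

variable {F : Type*} [Field F]

open Classical in
lemma card_filter_pow_dvd {P g : F[X]} (hP : Irreducible P) (hPm : P.Monic) (hg : g ≠ 0) {k : ℕ}
    (hk : g.natDegree ≤ k) :
    #{m ∈ Icc 1 k | P ^ m ∣ g} = (normalizedFactors g).count P := by
  have hdvd (m : ℕ) : P ^ m ∣ g ↔ m ≤ (normalizedFactors g).count P := by
    rw [pow_dvd_iff_le_emultiplicity, emultiplicity_eq_count_normalizedFactors hP hg,
      hPm.normalize_eq_self, Nat.cast_le]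
  have hcount : (normalizedFactors g).count P ≤ k := calc
    _ ≤ (normalizedFactors g).count P * P.natDegree := Nat.le_mul_of_pos_right _ hP.natDegree_pos
    _ = (P ^ (normalizedFactors g).count P).natDegree := (natDegree_pow _ _).symm
    _ ≤ k := (natDegree_le_of_dvd ((hdvd _).2 le_rfl) hg).trans hk
  rw [show {m ∈ Icc 1 k | P ^ m ∣ g} = Icc 1 ((normalizedFactors g).count P) by
    ext m; simp only [mem_filter, mem_Icc, hdvd]; omega, Nat.card_Icc, Nat.add_sub_cancel]

variable (F) [Finite F]

lemma finite_isMonicOfDegree (k : ℕ) : {g : F[X] | IsMonicOfDegree g k}.Finite := by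
  have hfinite : Finite (degreeLT F (k + 1)) := .of_equiv _ (degreeLTEquiv F (k + 1)).symm.toEquiv
  refine (Set.toFinite (degreeLT F (k + 1) : Set F[X])).subset fun g hg => mem_degreeLT.2 ?_
  refine degree_le_natDegree.trans_lt ?_
  rw [hg.natDegree_eq]
  exact_mod_cast k.lt_succ_self

/-- The finite set of monic polynomials of degree `k` over a finite field. -/
noncomputable def monicsOfDegree (k : ℕ) : Finset F[X] :=
  (finite_isMonicOfDegree F k).toFinset

open Classical in
/-- The finite set of monic irreducible polynomials of degree `k` over a finite field. -/
noncomputable def primesOfDegree (k : ℕ) : Finset F[X] :=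
  {P ∈ monicsOfDegree F k | Irreducible P}

variable {F}

@[simp] lemma mem_monicsOfDegree {k : ℕ} {g : F[X]} :
    g ∈ monicsOfDegree F k ↔ IsMonicOfDegree g k := by
  simp [monicsOfDegree]

@[simp] lemma mem_primesOfDegree {k : ℕ} {P : F[X]} :
    P ∈ primesOfDegree F k ↔ IsMonicOfDegree P k ∧ Irreducible P := by
  simp [primesOfDegree]

/-- For `χ` multiplicative on monic polynomials, the coefficient of `T ^ k` in the `L`-series
`∑ χ(g) T ^ deg g` over monic `g`. -/
noncomputable def lCoeff {R : Type*} [AddCommMonoid R] (χ : F[X] → R) (k : ℕ) : R :=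
  ∑ g ∈ monicsOfDegree F k, χ g

lemma lCoeff_zero {R : Type*} [AddCommMonoid R] (χ : F[X] → R) : lCoeff χ 0 = χ 1 := by
  have h : monicsOfDegree F 0 = {1} := by
    ext g
    rw [mem_monicsOfDegree, isMonicOfDegree_zero_iff, mem_singleton]
  rw [lCoeff, h, sum_singleton]

/-- The coefficient of `T ^ j` in `T` times the logarithmic derivative of the `L`-series of `χ`:
the sum of `(deg P) χ(P) ^ m` over the prime powers `P ^ m` of degree `j`. -/
noncomputable def primePowerSum {R : Type*} [Semiring R] (χ : F[X] → R) (j : ℕ) : R :=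
  ∑ em ∈ j.divisorsAntidiagonal, ∑ P ∈ primesOfDegree F em.1, (em.1 : R) * χ P ^ em.2

lemma sum_Icc_divisorsAntidiagonal {M : Type*} [AddCommMonoid M] (k : ℕ) (φ : ℕ × ℕ → M) :
    ∑ j ∈ Icc 1 k, ∑ x ∈ j.divisorsAntidiagonal, φ x =
      ∑ x ∈ Icc 1 k ×ˢ Icc 1 k with x.1 * x.2 ≤ k, φ x := by
  rw [← sum_fiberwise_of_maps_to (t := Icc 1 k) (g := fun x : ℕ × ℕ => x.1 * x.2)]
  · refine sum_congr rfl fun j hj => sum_congr ?_ fun _ _ => rfl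
    ext ⟨a, b⟩
    simp only [mem_Icc, Nat.mem_divisorsAntidiagonal, mem_filter, mem_product] at hj ⊢
    constructor
    · rintro ⟨rfl, -⟩
      have ha : 0 < a := Nat.pos_of_mul_pos_right hj.1
      have hb : 0 < b := Nat.pos_of_mul_pos_left hj.1
      exact ⟨⟨⟨⟨ha, (Nat.le_mul_of_pos_right a hb).trans hj.2⟩, hb,
        (Nat.le_mul_of_pos_left b ha).trans hj.2⟩, hj.2⟩, rfl⟩
    · rintro ⟨-, rfl⟩
      exact ⟨rfl, by omega⟩
  · rintro ⟨a, b⟩ h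
    simp only [mem_Icc, mem_filter, mem_product] at h ⊢
    exact ⟨Nat.mul_pos h.1.1.1 h.1.2.1, h.2⟩

open Classical in
lemma sum_count_normalizedFactors_mul {g : F[X]} {k : ℕ} (hg : IsMonicOfDegree g k) :
    ∑ e ∈ Icc 1 k, ∑ P ∈ primesOfDegree F e, (normalizedFactors g).count P * e = k := by
  have hg0 := hg.ne_zero
  have hmem {P : F[X]} (hP : P ∈ normalizedFactors g) : P.Monic ∧ Irreducible P := by
    have hirr := irreducible_of_normalized_factor P hP
    exact ⟨normalize_normalized_factor P hP ▸ monic_normalize hirr.ne_zero, hirr⟩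
  calc
    _ = ∑ e ∈ Icc 1 k, ∑ P ∈ (normalizedFactors g).toFinset with P.natDegree = e,
        (normalizedFactors g).count P * P.natDegree := by
      refine sum_congr rfl fun e _ => (sum_subset_zero_on_sdiff ?_ ?_ ?_).symm
      · intro P hP
        simp only [mem_filter, Multiset.mem_toFinset] at hP
        exact mem_primesOfDegree.2 ⟨⟨hP.2, (hmem hP.1).1⟩, (hmem hP.1).2⟩
      · intro P hP
        simp only [mem_sdiff, mem_primesOfDegree, mem_filter, Multiset.mem_toFinset, not_and] at hP
        rw [Multiset.count_eq_zero_of_notMem fun h => hP.2 h hP.1.1.natDegree_eq, zero_mul]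
      · intro P hP
        rw [(mem_filter.1 hP).2]
    _ = ∑ P ∈ (normalizedFactors g).toFinset, (normalizedFactors g).count P * P.natDegree := by
      refine sum_fiberwise_of_maps_to (fun P hP => ?_) _
      have hP := Multiset.mem_toFinset.1 hP
      exact mem_Icc.2 ⟨(hmem hP).2.natDegree_pos, hg.natDegree_eq ▸
        natDegree_le_of_dvd (dvd_of_mem_normalizedFactors hP) hg0⟩
    _ = (normalizedFactors g).prod.natDegree := by
      rw [natDegree_multiset_prod _ (zero_notMem_normalizedFactors g), sum_multiset_map_count]
      simp only [smul_eq_mul]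
    _ = k := by
      rw [natDegree_eq_of_degree_eq
        (degree_eq_degree_of_associated (prod_normalizedFactors hg0)), hg.natDegree_eq]

open Classical in
lemma sum_prime_pow_dvd_eq_degree {g : F[X]} {k : ℕ} (hg : IsMonicOfDegree g k) :
    ∑ j ∈ Icc 1 k, ∑ em ∈ j.divisorsAntidiagonal, ∑ P ∈ primesOfDegree F em.1,
      (if P ^ em.2 ∣ g then em.1 else 0) = k := by
  rw [sum_Icc_divisorsAntidiagonal, sum_filter_of_ne, sum_product]
  · conv_rhs => rw [← sum_count_normalizedFactors_mul hg]
    refine sum_congr rfl fun e _ => ?_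
    dsimp only
    rw [sum_comm]
    refine sum_congr rfl fun P hP => ?_
    obtain ⟨hPm, hP⟩ := mem_primesOfDegree.1 hP
    rw [← sum_filter, sum_const, card_filter_pow_dvd hP hPm.monic hg.ne_zero hg.natDegree_eq.le,
      smul_eq_mul]
  · rintro ⟨e, m⟩ - hne
    obtain ⟨P, hP, hPne⟩ := exists_ne_zero_of_sum_ne_zero hne
    have hdvd : P ^ m ∣ g := by
      by_contra h
      exact hPne (if_neg h)
    rw [← hg.natDegree_eq, ← (mem_primesOfDegree.1 hP).1.natDegree_eq, mul_comm, ← natDegree_pow]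
    exact natDegree_le_of_dvd hdvd hg.ne_zero

section Multiplicative

variable {R : Type*} [CommSemiring R] {χ : F[X] → R}
  (hχ : ∀ g h : F[X], g.Monic → h.Monic → χ (g * h) = χ g * χ h)

include hχ

open Classical in
lemma sum_monics_dvd {Q : F[X]} {i j : ℕ} (hQ : IsMonicOfDegree Q i) :
    ∑ g ∈ monicsOfDegree F (i + j) with Q ∣ g, χ g = χ Q * lCoeff χ j := by
  rw [lCoeff, mul_sum]
  symm
  refine sum_bij (fun h _ => Q * h) ?_ ?_ ?_ ?_
  · intro h hh
    rw [mem_filter, mem_monicsOfDegree]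
    exact ⟨hQ.mul (mem_monicsOfDegree.1 hh), dvd_mul_right Q h⟩
  · exact fun _ _ _ _ h => mul_left_cancel₀ hQ.ne_zero h
  · intro g hg
    rw [mem_filter, mem_monicsOfDegree] at hg
    obtain ⟨hg, h, rfl⟩ := hg
    exact ⟨h, mem_monicsOfDegree.2 (hQ.of_mul_left hg), rfl⟩
  · exact fun h hh => (hχ Q h hQ.monic (mem_monicsOfDegree.1 hh).monic).symm

theorem mul_lCoeff_eq_sum (hχ_one : χ 1 = 1) (k : ℕ) :
    k * lCoeff χ k = ∑ j ∈ Icc 1 k, primePowerSum χ j * lCoeff χ (k - j) := by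
  classical
  have hpow {P : F[X]} (hP : P.Monic) (m : ℕ) : χ (P ^ m) = χ P ^ m := by
    induction m with
    | zero => rw [pow_zero, pow_zero, hχ_one]
    | succ m ih => rw [pow_succ, hχ _ _ (hP.pow m) hP, ih, pow_succ]
  have hcount : k * lCoeff χ k = ∑ g ∈ monicsOfDegree F k, ∑ j ∈ Icc 1 k,
      ∑ em ∈ j.divisorsAntidiagonal, ∑ P ∈ primesOfDegree F em.1,
        if P ^ em.2 ∣ g then (em.1 : R) * χ g else 0 := by
    rw [lCoeff, mul_sum]
    refine sum_congr rfl fun g hg => ?_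
    have hk := congrArg (Nat.cast (R := R))
      (sum_prime_pow_dvd_eq_degree (mem_monicsOfDegree.1 hg))
    rw [← hk]
    simp only [Nat.cast_sum, Nat.cast_ite, Nat.cast_zero, sum_mul, ite_mul, zero_mul]
  rw [hcount, sum_comm]
  refine sum_congr rfl fun j hj => ?_
  rw [sum_comm, primePowerSum, sum_mul]
  refine sum_congr rfl fun em hem => ?_
  rw [sum_comm, sum_mul]
  refine sum_congr rfl fun P hP => ?_
  have hPm := (mem_primesOfDegree.1 hP).1
  have hPj : IsMonicOfDegree (P ^ em.2) j := (Nat.mem_divisorsAntidiagonal.1 hem).1 ▸ hPm.pow em.2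
  have hsum := sum_monics_dvd hχ (j := k - j) hPj
  rw [Nat.add_sub_cancel' (mem_Icc.1 hj).2, hpow hPm.monic] at hsum
  rw [← sum_filter, ← mul_sum, hsum, mul_assoc]

end Multiplicative

end PrimeSums

section Newton

variable {R : Type*} [CommRing R]

/-- The `j`-th power sum of a multiset. -/
def powerSum (m : Multiset R) (j : ℕ) : R := (m.map (· ^ j)).sum

lemma powerSum_eq_mul_esymm_sub_sum (m : Multiset R) {k : ℕ} (hk : 0 < k) :
    powerSum m k = (-1) ^ (k + 1) * k * m.esymm k -
      ∑ a ∈ antidiagonal k with a.1 ∈ Set.Ioo 0 k, (-1) ^ a.1 * m.esymm a.1 * powerSum m a.2 := by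
  obtain ⟨l, rfl⟩ := Quot.exists_rep m
  have hl : (univ : Finset (Fin l.length)).val.map l.get = (l : Multiset R) := by
    simp [Fin.univ_val_map]
  have hpsum (j : ℕ) : MvPolynomial.aeval l.get (MvPolynomial.psum (Fin l.length) ℤ j) =
      powerSum (l : Multiset R) j := by
    rw [MvPolynomial.psum, map_sum, powerSum, ← hl, Multiset.map_map]
    simp [Finset.sum]
  have hesymm (j : ℕ) : MvPolynomial.aeval l.get (MvPolynomial.esymm (Fin l.length) ℤ j) =
      (l : Multiset R).esymm j := by
    rw [MvPolynomial.aeval_esymm_eq_multiset_esymm, hl]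
  have hnewton := congrArg (MvPolynomial.aeval l.get)
    (MvPolynomial.psum_eq_mul_esymm_sub_sum (Fin l.length) ℤ k hk)
  simp only [map_sub, map_sum, map_mul, map_pow, map_neg, map_one, map_natCast, hpsum,
    hesymm] at hnewton
  exact hnewton

variable {m m' : Multiset R} (hcard : m.card = m'.card) {d : ℕ}
  (hesymm : ∀ i < d, m.esymm i = m'.esymm i)

include hcard hesymm

lemma powerSum_eq_of_esymm_eq {j : ℕ} (hj : j < d) : powerSum m j = powerSum m' j := by
  induction j using Nat.strong_induction_on with
  | _ j ih =>
    rcases j.eq_zero_or_pos with rfl | hpos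
    · simp [powerSum, hcard]
    · rw [powerSum_eq_mul_esymm_sub_sum m hpos, powerSum_eq_mul_esymm_sub_sum m' hpos, hesymm j hj]
      congr 1
      refine sum_congr rfl fun a ha => ?_
      simp only [mem_filter, HasAntidiagonal.mem_antidiagonal, Set.mem_Ioo] at ha
      rw [hesymm a.1 (by omega), ih a.2 (by omega) (by omega)]

lemma powerSum_sub_powerSum (hd : 0 < d) :
    powerSum m d - powerSum m' d = (-1) ^ (d + 1) * d * (m.esymm d - m'.esymm d) := by
  have hlower : ∑ a ∈ antidiagonal d with a.1 ∈ Set.Ioo 0 d,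
      (-1) ^ a.1 * m.esymm a.1 * powerSum m a.2 = ∑ a ∈ antidiagonal d with a.1 ∈ Set.Ioo 0 d,
      (-1) ^ a.1 * m'.esymm a.1 * powerSum m' a.2 := by
    refine sum_congr rfl fun a ha => ?_
    simp only [mem_filter, HasAntidiagonal.mem_antidiagonal, Set.mem_Ioo] at ha
    rw [hesymm a.1 (by omega), powerSum_eq_of_esymm_eq hcard hesymm (by omega)]
  rw [powerSum_eq_mul_esymm_sub_sum m hd, powerSum_eq_mul_esymm_sub_sum m' hd, hlower]
  ring

end Newton

section RootSums

open Polynomial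

variable {F : Type*} [Field F] (Ω : Type*) [Field Ω] [Algebra F Ω]

/-- The sum of the values of `f` at the roots of `g` in `Ω`, with multiplicity. -/
noncomputable def rootSum (f g : F[X]) : Ω := ((g.aroots Ω).map (aeval · f)).sum

lemma rootSum_one (f : F[X]) : rootSum Ω f 1 = 0 := by
  simp [rootSum]

lemma rootSum_mul (f : F[X]) {g h : F[X]} (hg : g ≠ 0) (hh : h ≠ 0) :
    rootSum Ω f (g * h) = rootSum Ω f g + rootSum Ω f h := by
  rw [rootSum, aroots_mul (mul_ne_zero hg hh), Multiset.map_add, Multiset.sum_add, rootSum, rootSum]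

lemma rootSum_eq_sum_coeff_mul_powerSum (f g : F[X]) :
    rootSum Ω f g =
      ∑ j ∈ range (f.natDegree + 1), algebraMap F Ω (f.coeff j) * powerSum (g.aroots Ω) j := by
  simp only [rootSum, powerSum, aeval_eq_sum_range, Algebra.smul_def, Multiset.sum_map_sum_map,
    Multiset.sum_map_mul_left, Finset.sum_eq_multiset_sum]

variable [IsAlgClosed Ω]

lemma card_aroots (g : F[X]) : (g.aroots Ω).card = g.natDegree := by
  rw [aroots, ← (IsAlgClosed.splits _).natDegree_eq_card_roots, natDegree_map]

lemma esymm_aroots {g : F[X]} {k i : ℕ} (hg : IsMonicOfDegree g k) (hi : i ≤ k) :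
    (g.aroots Ω).esymm i = (-1) ^ i * algebraMap F Ω (g.coeff (k - i)) := by
  have hdeg : (g.map (algebraMap F Ω)).natDegree = k := by rw [natDegree_map, hg.natDegree_eq]
  have hvieta := coeff_eq_esymm_roots_of_splits (IsAlgClosed.splits (g.map (algebraMap F Ω)))
    (k := k - i) (by omega)
  rw [coeff_map, (hg.monic.map _).leadingCoeff, hdeg, Nat.sub_sub_self hi, one_mul] at hvieta
  rw [hvieta, ← mul_assoc, ← mul_pow, neg_one_mul, neg_neg, one_pow, one_mul]

lemma isMonicOfDegree_add_C_mul_X_pow {R : Type*} [Semiring R] {g : R[X]} {k j : ℕ}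
    (hg : IsMonicOfDegree g k) (hj : j < k) (c : R) : IsMonicOfDegree (g + C c * X ^ j) k :=
  hg.add_right ((natDegree_C_mul_X_pow_le c j).trans_lt hj)

lemma rootSum_add_C_mul_X_pow {f g : F[X]} {k : ℕ} (hg : IsMonicOfDegree g k)
    (hf : f.natDegree ≠ 0) (hk : f.natDegree ≤ k) (c : F) :
    rootSum Ω f (g + C c * X ^ (k - f.natDegree)) =
      rootSum Ω f g + algebraMap F Ω (-(f.natDegree * f.leadingCoeff * c)) := by
  set d := f.natDegree with hd
  set g' := g + C c * X ^ (k - d) with hg'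
  have hg'k : IsMonicOfDegree g' k := isMonicOfDegree_add_C_mul_X_pow hg (by omega) c
  have hcard : (g'.aroots Ω).card = (g.aroots Ω).card := by
    rw [card_aroots, card_aroots, hg'k.natDegree_eq, hg.natDegree_eq]
  have hcoeff (i : ℕ) : g'.coeff i = g.coeff i + if i = k - d then c else 0 := by
    rw [hg', coeff_add, coeff_C_mul_X_pow]
  have hesymm (i : ℕ) (hi : i < d) : (g'.aroots Ω).esymm i = (g.aroots Ω).esymm i := by
    rw [esymm_aroots Ω hg (by omega), esymm_aroots Ω hg'k (by omega), hcoeff, if_neg (by omega),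
      add_zero]
  have hlow : ∀ j ∈ range d, algebraMap F Ω (f.coeff j) * powerSum (g'.aroots Ω) j -
      algebraMap F Ω (f.coeff j) * powerSum (g.aroots Ω) j = 0 := fun j hj => by
    rw [powerSum_eq_of_esymm_eq hcard hesymm (mem_range.1 hj), sub_self]
  rw [← sub_eq_iff_eq_add', rootSum_eq_sum_coeff_mul_powerSum, rootSum_eq_sum_coeff_mul_powerSum,
    ← sum_sub_distrib, sum_range_succ, ← hd, sum_eq_zero hlow, zero_add, ← mul_sub,
    powerSum_sub_powerSum hcard hesymm (Nat.pos_of_ne_zero hf), esymm_aroots Ω hg hk,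
    esymm_aroots Ω hg'k hk, hcoeff, if_pos rfl, ← mul_sub, ← map_sub, add_sub_cancel_left,
    leadingCoeff, ← hd]
  have hsign : (-1 : Ω) ^ (d + 1) * (-1) ^ d = -1 := by
    rw [pow_succ, mul_right_comm, ← mul_pow]; simp
  simp only [map_neg, map_mul, map_natCast]
  linear_combination (algebraMap F Ω (f.coeff d)) * d * algebraMap F Ω c * hsign

end RootSums

section RootCharacter

open Polynomial

variable {F : Type*} [Field F] {Ω : Type*} [Field Ω] [Algebra F Ω]

/-- The character `g ↦ Ψ(∑ f(a))`, the sum running over the roots `a` of `g` in `Ω`. It is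
multiplicative, and its `L`-series encodes the sums `∑ Ψ(Tr f(x))` over all finite extensions
of `F`. -/
noncomputable def rootChar (Ψ : AddChar Ω ℂ) (f g : F[X]) : ℂ := Ψ (rootSum Ω f g)

lemma rootChar_one (Ψ : AddChar Ω ℂ) (f : F[X]) : rootChar Ψ f 1 = 1 := by
  rw [rootChar, rootSum_one, AddChar.map_zero_eq_one]

lemma rootChar_mul (Ψ : AddChar Ω ℂ) (f : F[X]) {g h : F[X]} (hg : g ≠ 0) (hh : h ≠ 0) :
    rootChar Ψ f (g * h) = rootChar Ψ f g * rootChar Ψ f h := by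
  rw [rootChar, rootSum_mul Ω f hg hh, AddChar.map_add_eq_mul, rootChar, rootChar]

theorem lCoeff_rootChar_eq_zero [Finite F] [IsAlgClosed Ω] {Ψ : AddChar Ω ℂ}
    (hΨ : Ψ.compAddMonoidHom (algebraMap F Ω).toAddMonoidHom ≠ 1) {f : F[X]}
    (hf : (f.natDegree : F) ≠ 0) {k : ℕ} (hk : f.natDegree ≤ k) :
    lCoeff (rootChar Ψ f) k = 0 := by
  obtain ⟨b, hb⟩ := AddChar.ne_one_iff.1 hΨ
  change Ψ (algebraMap F Ω b) ≠ 1 at hb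
  have hdeg : f.natDegree ≠ 0 := fun h => hf (by rw [h, Nat.cast_zero])
  have hlead : f.leadingCoeff ≠ 0 := by
    rw [Ne, leadingCoeff_eq_zero]
    rintro rfl
    exact hdeg natDegree_zero
  set c : F := -b / (f.natDegree * f.leadingCoeff) with hc
  have hcb : -(f.natDegree * f.leadingCoeff * c) = b := by rw [hc]; field_simp
  have hmem (e : F) {g : F[X]} (hg : g ∈ monicsOfDegree F k) :
      g + C e * X ^ (k - f.natDegree) ∈ monicsOfDegree F k :=
    mem_monicsOfDegree.2 (isMonicOfDegree_add_C_mul_X_pow (mem_monicsOfDegree.1 hg) (by omega) e)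
  have hshift : Ψ (algebraMap F Ω b) * lCoeff (rootChar Ψ f) k = lCoeff (rootChar Ψ f) k := by
    rw [lCoeff, mul_sum]
    refine sum_bij' (fun g _ => g + C c * X ^ (k - f.natDegree))
      (fun g _ => g + C (-c) * X ^ (k - f.natDegree)) (fun g hg => hmem c hg)
      (fun g hg => hmem (-c) hg) (fun g _ => by simp) (fun g _ => by simp) fun g hg => ?_
    rw [rootChar, rootChar, rootSum_add_C_mul_X_pow Ω (mem_monicsOfDegree.1 hg) hdeg hk, hcb,
      AddChar.map_add_eq_mul, mul_comm]
  exact (mul_left_eq_self₀.1 hshift).resolve_left hb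

variable (Ω) in
lemma exists_addChar_extend {M : Type*} [CommMonoid M] (ψ : AddChar F M) :
    ∃ Ψ : AddChar Ω M, Ψ.compAddMonoidHom (algebraMap F Ω).toAddMonoidHom = ψ := by
  obtain ⟨π, hπ⟩ := LinearMap.exists_leftInverse_of_injective (Algebra.linearMap F Ω)
    (LinearMap.ker_eq_bot.2 (algebraMap F Ω).injective)
  refine ⟨ψ.compAddMonoidHom π.toAddMonoidHom, DFunLike.ext _ _ fun a => ?_⟩
  exact congrArg ψ (LinearMap.congr_fun hπ a)

end RootCharacter

section TraceFormula

open Polynomial IntermediateField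

variable {F : Type*} [Field F] (Ω : Type*) [Field Ω] [Algebra F Ω] [IsAlgClosed Ω]
  {K : Type*} [Field K] [Algebra F K] [FiniteDimensional F K] [Algebra.IsSeparable F K]

lemma algebraMap_trace_aeval_gen_eq_rootSum (pb : PowerBasis F K) (f : F[X]) :
    algebraMap F Ω (Algebra.trace F K (aeval pb.gen f)) = rootSum Ω f (minpoly F pb.gen) := by
  classical
  have hnodup : ((minpoly F pb.gen).aroots Ω).Nodup :=
    nodup_roots (Separable.map (Algebra.IsSeparable.isSeparable F pb.gen))
  calc
    _ = ∑ σ : K →ₐ[F] Ω, aeval (σ pb.gen) f := by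
      rw [trace_eq_sum_embeddings Ω]
      exact sum_congr rfl fun σ _ => (aeval_algHom_apply σ _ f).symm
    _ = ∑ a : {a : Ω // a ∈ (minpoly F pb.gen).aroots Ω}, aeval a.1 f :=
      Fintype.sum_equiv pb.liftEquiv' _ _ fun σ => by rw [PowerBasis.liftEquiv'_apply_coe]
    _ = ∑ a ∈ ((minpoly F pb.gen).aroots Ω).toFinset, aeval a f :=
      (sum_subtype _ (fun a => Multiset.mem_toFinset) (aeval · f)).symm
    _ = rootSum Ω f (minpoly F pb.gen) := by
      rw [sum_eq_multiset_sum, Multiset.toFinset_val, hnodup.dedup, rootSum]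

lemma algebraMap_trace_aeval_eq_rootSum (f : F[X]) (x : K) :
    algebraMap F Ω (Algebra.trace F K (aeval x f)) =
      Module.finrank F⟮x⟯ K • rootSum Ω f (minpoly F x) := by
  have hx : IsIntegral F x := Algebra.IsIntegral.isIntegral x
  have hgen : (aeval x f : K) = algebraMap F⟮x⟯ K (aeval (adjoin.powerBasis hx).gen f) := by
    rw [← aeval_algebraMap_apply, adjoin.powerBasis_gen, AdjoinSimple.algebraMap_gen]
  rw [hgen, ← Algebra.trace_trace (S := F⟮x⟯), Algebra.trace_algebraMap, map_nsmul, map_nsmul,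
    algebraMap_trace_aeval_gen_eq_rootSum, adjoin.powerBasis_gen, minpoly_gen]

end TraceFormula

section Extensions

open Polynomial IntermediateField

variable {F : Type*} [Field F] [Finite F]

section Fibers

variable {K : Type*} [Field K] [Algebra F K] [Fintype K]

open Classical in
lemma card_filter_minpoly_eq {P : F[X]} (hPm : P.Monic) (hP : Irreducible P)
    (hdvd : P.natDegree ∣ Module.finrank F K) :
    #{x : K | minpoly F x = P} = P.natDegree := by
  have hX : P ∣ X ^ Fintype.card K - X := by
    rw [← Nat.card_eq_fintype_card, Module.natCard_eq_pow_finrank (K := F)]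
    exact hP.natDegree_dvd_iff_dvd_X_pow_card_pow_sub_X.1 hdvd
  have hsplits : (P.map (algebraMap F K)).Splits :=
    (FiniteField.isSplittingField_sub K F).splits.of_dvd
      ((Polynomial.map_ne_zero_iff (algebraMap F K).injective).2
        (FiniteField.X_pow_card_sub_X_ne_zero F Fintype.one_lt_card))
      (Polynomial.map_dvd (algebraMap F K) hX)
  have hroots : ({x : K | minpoly F x = P} : Finset K) = (P.aroots K).toFinset := by
    ext x
    simp only [mem_filter_univ, Multiset.mem_toFinset, mem_aroots]
    constructor
    · rintro rfl
      exact ⟨hPm.ne_zero, minpoly.aeval F x⟩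
    · exact fun h => (minpoly.eq_of_irreducible_of_monic hP h.2 hPm).symm
  rw [hroots, Multiset.toFinset_card_of_nodup
    (nodup_roots (Separable.map (PerfectField.separable_of_irreducible hP))),
    ← hsplits.natDegree_eq_card_roots, natDegree_map]

lemma sum_pow_finrank_adjoin_eq_primePowerSum {R : Type*} [CommSemiring R] (χ : F[X] → R) :
    ∑ x : K, χ (minpoly F x) ^ Module.finrank F⟮x⟯ K = primePowerSum χ (Module.finrank F K) := by
  classical
  have hint (x : K) : IsIntegral F x := Algebra.IsIntegral.isIntegral x
  have hfinrank (x : K) :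
      (minpoly F x).natDegree * Module.finrank F⟮x⟯ K = Module.finrank F K := by
    rw [← adjoin.finrank (hint x), Module.finrank_mul_finrank]
  rw [primePowerSum, ← sum_fiberwise_of_maps_to
    (g := fun x : K => ((minpoly F x).natDegree, Module.finrank F⟮x⟯ K))
    fun x _ => Nat.mem_divisorsAntidiagonal.2 ⟨hfinrank x, Module.finrank_pos.ne'⟩]
  refine sum_congr rfl fun em hem => ?_
  obtain ⟨hem, -⟩ := Nat.mem_divisorsAntidiagonal.1 hem
  rw [← sum_fiberwise_of_maps_to (t := primesOfDegree F em.1) (g := minpoly F) fun x hx => ?_]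
  · refine sum_congr rfl fun P hP => ?_
    obtain ⟨hPm, hP⟩ := mem_primesOfDegree.1 hP
    have hfiber : ({x ∈ ({x : K | ((minpoly F x).natDegree, Module.finrank F⟮x⟯ K) = em} :
        Finset K) | minpoly F x = P}) = ({x : K | minpoly F x = P} : Finset K) := by
      ext x
      simp only [mem_filter, mem_univ, true_and, and_iff_right_iff_imp]
      rintro rfl
      have hdeg := hPm.natDegree_eq
      refine Prod.ext hdeg (Nat.eq_of_mul_eq_mul_left (minpoly.natDegree_pos (hint x)) ?_)
      rw [hfinrank, ← hem, hdeg]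
    rw [hfiber, ← hPm.natDegree_eq, ← card_filter_minpoly_eq hPm.monic hP
      (hPm.natDegree_eq.symm ▸ hem ▸ dvd_mul_right _ _), ← nsmul_eq_mul, ← sum_const]
    refine sum_congr rfl fun x hx => ?_
    rw [← hfiber, mem_filter, mem_filter] at hx
    rw [hx.2, ← hx.1.2]
  · exact mem_primesOfDegree.2 ⟨⟨congrArg Prod.fst (mem_filter.1 hx).2, minpoly.monic (hint x)⟩,
      minpoly.irreducible (hint x)⟩

variable {Ω : Type*} [Field Ω] [Algebra F Ω] [IsAlgClosed Ω]

theorem primePowerSum_rootChar_eq_sum_trace (Ψ : AddChar Ω ℂ) (f : F[X]) :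
    primePowerSum (rootChar Ψ f) (Module.finrank F K) =
      ∑ x : K, Ψ (algebraMap F Ω (Algebra.trace F K (aeval x f))) := by
  rw [← sum_pow_finrank_adjoin_eq_primePowerSum]
  refine sum_congr rfl fun x _ => ?_
  rw [algebraMap_trace_aeval_eq_rootSum, AddChar.map_nsmul_eq_pow, rootChar]

end Fibers

variable {Ω : Type*} [Field Ω] [Algebra F Ω]

lemma lCoeff_rootChar_one [IsAlgClosed Ω] [Fintype F] (Ψ : AddChar Ω ℂ) (f : F[X]) :
    lCoeff (rootChar Ψ f) 1 = ∑ x : F, Ψ (algebraMap F Ω (f.eval x)) := by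
  have hrec := mul_lCoeff_eq_sum (χ := rootChar Ψ f)
    (fun g h hg hh => rootChar_mul Ψ f hg.ne_zero hh.ne_zero) (rootChar_one Ψ f) 1
  have htrace := primePowerSum_rootChar_eq_sum_trace (K := F) Ψ f
  simp only [Module.finrank_self, Algebra.trace_self_apply, coe_aeval_eq_eval] at htrace
  rw [Nat.cast_one, one_mul, Icc_self, sum_singleton, lCoeff_zero, rootChar_one, mul_one,
    htrace] at hrec
  exact hrec

theorem norm_primePowerSum_rootChar_le [IsAlgClosed Ω] [Fintype F] {Ψ : AddChar Ω ℂ}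
    (hΨ : Ψ.compAddMonoidHom (algebraMap F Ω).toAddMonoidHom ≠ 1) {f : F[X]}
    (hf : (Fintype.card F).Coprime f.natDegree) {n : ℕ} (hn : n ≠ 0) :
    ‖primePowerSum (rootChar Ψ f) n‖ ≤
      2 * Fintype.card F ^ 2 * (3 * f.natDegree + 3) * √(Fintype.card F) ^ n := by
  obtain ⟨p, hp⟩ := CharP.exists F
  have : Fact p.Prime := ⟨CharP.char_is_prime F p⟩
  have : NeZero n := ⟨hn⟩
  let K := FiniteField.Extension F p n
  have : Finite K := Module.finite_of_finite F
  have : Fintype K := .ofFinite K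
  have hfinrank : Module.finrank F K = n := FiniteField.finrank_extension F p n
  have htrace := primePowerSum_rootChar_eq_sum_trace (K := K) Ψ f
  rw [hfinrank] at htrace
  rw [htrace]
  rcases (Nat.one_le_iff_ne_zero.2 hn).eq_or_lt with rfl | hn2
  · have hq : (1 : ℝ) ≤ Fintype.card F := mod_cast Fintype.card_pos
    calc
      _ ≤ ∑ x : K, ‖Ψ (algebraMap F Ω (Algebra.trace F K (aeval x f)))‖ := norm_sum_le _ _
      _ = ∑ _x : K, (1 : ℝ) := sum_congr rfl fun x _ =>
        AddChar.norm_apply (Ψ.compAddMonoidHom (algebraMap F Ω).toAddMonoidHom) _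
      _ = Fintype.card F * 1 * 1 := by
        rw [sum_const, card_univ, nsmul_one, Module.card_eq_pow_finrank (K := F), hfinrank,
          pow_one, mul_one, mul_one]
      _ ≤ 2 * Fintype.card F ^ 2 * (3 * f.natDegree + 3) * √(Fintype.card F) ^ 1 := by
        gcongr
        · nlinarith
        · linarith [(f.natDegree.cast_nonneg : (0 : ℝ) ≤ _)]
        · exact one_le_pow₀ (Real.one_le_sqrt.2 hq)
  · have hbound := norm_sum_addChar_trace_le hf hΨ (K := K) (hn2.trans_eq hfinrank.symm)
    rwa [hfinrank] at hbound

end Extensions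

section LogDerivative

open Polynomial

lemma hasSum_coeff_mul_pow {R : Type*} [Semiring R] [TopologicalSpace R] (A : R[X]) (t : R) :
    HasSum (fun k => A.coeff k * t ^ k) (A.eval t) := by
  rw [eval_eq_sum_range]
  refine hasSum_sum_of_ne_finset_zero fun k hk => ?_
  rw [coeff_eq_zero_of_natDegree_lt (by simpa using hk), zero_mul]

variable {A : ℂ[X]} {ℓ : ℕ → ℂ} (hA : (A.derivative : PowerSeries ℂ) = PowerSeries.mk ℓ * A)

include hA

lemma eval_derivative_eq_tsum_mul {t : ℂ} (ht : Summable fun j => ‖ℓ j * t ^ j‖) :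
    A.derivative.eval t = (∑' j, ℓ j * t ^ j) * A.eval t := by
  have hsummable : Summable fun k => ‖A.coeff k * t ^ k‖ :=
    summable_of_ne_finset_zero (s := range (A.natDegree + 1)) fun k hk => by
      rw [coeff_eq_zero_of_natDegree_lt (by simpa using hk), zero_mul, norm_zero]
  rw [← (hasSum_coeff_mul_pow A t).tsum_eq, ← (hasSum_coeff_mul_pow _ t).tsum_eq,
    tsum_mul_tsum_eq_tsum_sum_antidiagonal_of_summable_norm ht hsummable]
  refine tsum_congr fun k => ?_
  have hcoeff := congrArg (PowerSeries.coeff k) hA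
  simp only [coeff_coe, PowerSeries.coeff_mul, PowerSeries.coeff_mk] at hcoeff
  rw [hcoeff, sum_mul]
  refine sum_congr rfl fun ij hij => ?_
  rw [← HasAntidiagonal.mem_antidiagonal.1 hij, pow_add]
  ring

-- Grönwall along the segment from a hypothetical root to `0`: a solution of `A' = ℓ A` that
-- vanishes at one point of the disc of convergence vanishes at `0`.
lemma eval_ne_zero_of_derivative_eq_mul (hA₀ : A.coeff 0 ≠ 0) {t : ℂ}
    (ht : Summable fun j => ‖ℓ j * t ^ j‖) : A.eval t ≠ 0 := by
  intro hroot
  set g : ℝ → ℂ := fun x => A.eval (((1 - x : ℝ) : ℂ) * t) with hg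
  have hderiv (x : ℝ) : HasDerivAt g (-t * A.derivative.eval (((1 - x : ℝ) : ℂ) * t)) x := by
    have hpath : HasDerivAt (fun x : ℝ => ((1 - x : ℝ) : ℂ) * t) (-t) x := by
      have h := (((hasDerivAt_id x).const_sub 1).ofReal_comp).mul_const t
      simpa using h
    have h := (A.hasDerivAt (((1 - x : ℝ) : ℂ) * t)).comp_of_eq x hpath rfl
    simpa [hg, Function.comp_def, mul_comm] using h
  have hle {x : ℝ} (hx : x ∈ Set.Icc (0 : ℝ) 1) (j : ℕ) :
      ‖ℓ j * (((1 - x : ℝ) : ℂ) * t) ^ j‖ ≤ ‖ℓ j * t ^ j‖ := by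
    have hx1 : ‖((1 - x : ℝ) : ℂ)‖ ≤ 1 := by
      rw [Complex.norm_real, Real.norm_eq_abs, abs_of_nonneg (by linarith [hx.2])]
      linarith [hx.1]
    rw [norm_mul, norm_mul, norm_pow, norm_pow, norm_mul]
    gcongr
    exact mul_le_of_le_one_left (norm_nonneg _) hx1
  have hbound (x : ℝ) (hx : x ∈ Set.Ico (0 : ℝ) 1) :
      ‖-t * A.derivative.eval (((1 - x : ℝ) : ℂ) * t)‖ ≤ (‖t‖ * ∑' j, ‖ℓ j * t ^ j‖) * ‖g x‖ := by
    have hx' := Set.Ico_subset_Icc_self hx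
    rw [eval_derivative_eq_tsum_mul hA (ht.of_nonneg_of_le (fun _ => norm_nonneg _) (hle hx')),
      norm_mul, norm_mul, norm_neg, ← mul_assoc]
    gcongr
    exact tsum_of_norm_bounded ht.hasSum (hle hx')
  have hzero := eq_zero_of_abs_deriv_le_mul_abs_self_of_eq_zero_right
    (fun x _ => (hderiv x).continuousAt.continuousWithinAt)
    (fun x _ => (hderiv x).hasDerivWithinAt) (by simpa [hg] using hroot) hbound 1
    (Set.right_mem_Icc.2 zero_le_one)
  simp only [hg, sub_self, Complex.ofReal_zero, zero_mul, ← coeff_zero_eq_eval_zero] at hzero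
  exact hA₀ hzero

omit hA in
lemma norm_multiset_sum_le_card_mul {E : Type*} [SeminormedAddCommGroup E] {m : Multiset E} {R : ℝ}
    (hm : ∀ w ∈ m, ‖w‖ ≤ R) : ‖m.sum‖ ≤ m.card * R := by
  rw [← nsmul_eq_mul, ← Multiset.card_map norm]
  refine (norm_multiset_sum_le m).trans (Multiset.sum_le_card_nsmul _ _ fun x hx => ?_)
  obtain ⟨w, hw, rfl⟩ := Multiset.mem_map.1 hx
  exact hm w hw

theorem norm_coeff_one_le_of_derivative_eq_mul (hA₀ : A.coeff 0 = 1) {C R : ℝ} (hR : 0 < R)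
    (hℓ : ∀ j, ‖ℓ j‖ ≤ C * R ^ (j + 1)) : ‖A.coeff 1‖ ≤ A.natDegree * R := by
  have htrailing : A.natTrailingDegree = 0 :=
    natTrailingDegree_eq_zero_of_constantCoeff_ne_zero (by simp [hA₀])
  have hdeg : A.reverse.natDegree = A.natDegree := by
    rw [reverse_natDegree, htrailing, Nat.sub_zero]
  have hmonic : A.reverse.Monic := by
    rw [Monic, reverse_leadingCoeff, trailingCoeff, htrailing, hA₀]
  have hroots (w : ℂ) (hw : w ∈ A.reverse.roots) : ‖w‖ ≤ R := by
    rcases eq_or_ne w 0 with rfl | hw0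
    · rw [norm_zero]
      exact hR.le
    have hwpos : 0 < ‖w‖ := norm_pos_iff.2 hw0
    by_contra! hlt
    have hsummable : Summable fun j => ‖ℓ j * w⁻¹ ^ j‖ := by
      refine .of_nonneg_of_le (fun _ => norm_nonneg _) (fun j => ?_)
        ((summable_geometric_of_lt_one (div_nonneg hR.le hwpos.le)
          ((div_lt_one hwpos).2 hlt)).mul_left (C * R))
      rw [norm_mul, norm_pow, norm_inv, div_eq_mul_inv, mul_pow, ← mul_assoc, mul_assoc C,
        ← pow_succ']
      gcongr
      exact hℓ j
    have : Invertible w⁻¹ := invertibleOfNonzero (inv_ne_zero hw0)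
    have hiff := eval₂_reverse_eq_zero_iff (RingHom.id ℂ) w⁻¹ A
    rw [invOf_eq_inv, inv_inv] at hiff
    exact eval_ne_zero_of_derivative_eq_mul hA (by rw [hA₀]; exact one_ne_zero) hsummable
      (hiff.1 ((mem_roots hmonic.ne_zero).1 hw))
  have hvieta : A.coeff 1 = -A.reverse.roots.sum := by
    rw [← (IsAlgClosed.splits A.reverse).nextCoeff_eq_neg_sum_roots_of_monic hmonic,
      ← coeff_one_reverse, coeff_reverse, hdeg, coeff_reverse, revAt_invol]
  rw [hvieta, norm_neg, ← hdeg, (IsAlgClosed.splits A.reverse).natDegree_eq_card_roots]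
  exact norm_multiset_sum_le_card_mul hroots

end LogDerivative

section Weil

open Polynomial

variable {F : Type*} [Field F] [Fintype F]

local notation "q" => Fintype.card F

section LPolynomial

variable {Ω : Type*} [Field Ω] [Algebra F Ω] (Ψ : AddChar Ω ℂ) (f : F[X])

/-- The `L`-polynomial of the character `rootChar Ψ f`: its `L`-series, which by
`lCoeff_rootChar_eq_zero` stops before the degree of `f` when that degree is prime to the
characteristic. -/
noncomputable def lPolynomial : ℂ[X] :=
  ∑ k ∈ range f.natDegree, C (lCoeff (rootChar Ψ f) k) * X ^ k

variable {Ψ f}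

lemma natDegree_lPolynomial_le : (lPolynomial Ψ f).natDegree ≤ f.natDegree - 1 := by
  refine natDegree_sum_le_of_forall_le _ _ fun k hk => (natDegree_C_mul_X_pow_le _ _).trans ?_
  have := mem_range.1 hk
  omega

variable [IsAlgClosed Ω]

lemma coeff_lPolynomial (hΨ : Ψ.compAddMonoidHom (algebraMap F Ω).toAddMonoidHom ≠ 1)
    (hf : (q).Coprime f.natDegree) (k : ℕ) :
    (lPolynomial Ψ f).coeff k = lCoeff (rootChar Ψ f) k := by
  have hd : (f.natDegree : F) ≠ 0 := by
    have h := hf.cast (R := F)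
    rw [FiniteField.cast_card_eq_zero, isCoprime_zero_left] at h
    exact h.ne_zero
  simp only [lPolynomial, finsetSum_coeff, coeff_C_mul_X_pow, sum_ite_eq, mem_range]
  exact ite_eq_left_iff.2 fun h => (lCoeff_rootChar_eq_zero hΨ hd (not_lt.1 h)).symm

lemma derivative_lPolynomial (hΨ : Ψ.compAddMonoidHom (algebraMap F Ω).toAddMonoidHom ≠ 1)
    (hf : (q).Coprime f.natDegree) :
    ((lPolynomial Ψ f).derivative : PowerSeries ℂ) =
      PowerSeries.mk (fun j => primePowerSum (rootChar Ψ f) (j + 1)) * lPolynomial Ψ f := by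
  ext k
  have hrec := mul_lCoeff_eq_sum (χ := rootChar Ψ f)
    (fun g h hg hh => rootChar_mul Ψ f hg.ne_zero hh.ne_zero) (rootChar_one Ψ f) (k + 1)
  simp only [coeff_coe, PowerSeries.coeff_mul, PowerSeries.coeff_mk, coeff_derivative,
    coeff_lPolynomial hΨ hf]
  rw [mul_comm, ← Nat.cast_succ, hrec, Nat.sum_antidiagonal_eq_sum_range_succ
    (fun i j => primePowerSum (rootChar Ψ f) (i + 1) * lCoeff (rootChar Ψ f) j) k,
    ← Ico_add_one_right_eq_Icc, sum_Ico_eq_sum_range]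
  refine sum_congr rfl fun i _ => ?_
  rw [add_comm 1 i, Nat.add_sub_add_right]

end LPolynomial

theorem norm_sum_addChar_eval_le {ψ : AddChar F ℂ} (hψ : ψ ≠ 1) {f : F[X]}
    (hf : (q).Coprime f.natDegree) :
    ‖∑ x : F, ψ (f.eval x)‖ ≤ (f.natDegree - 1 : ℝ) * √q := by
  obtain ⟨Ψ, rfl⟩ := exists_addChar_extend (AlgebraicClosure F) ψ
  have hbound := norm_coeff_one_le_of_derivative_eq_mul (derivative_lPolynomial hψ hf)
    (by rw [coeff_lPolynomial hψ hf, lCoeff_zero, rootChar_one])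
    (Real.sqrt_pos.2 (Nat.cast_pos.2 Fintype.card_pos))
    fun j => norm_primePowerSum_rootChar_le hψ hf j.succ_ne_zero
  rw [coeff_lPolynomial hψ hf, lCoeff_rootChar_one] at hbound
  refine hbound.trans (mul_le_mul_of_nonneg_right ?_ (Real.sqrt_nonneg _))
  rw [← Nat.cast_pred (Nat.pos_of_ne_zero (natDegree_ne_zero_of_coprime hf))]
  exact Nat.cast_le.2 natDegree_lPolynomial_le

end Weil

section PrimeField

open Polynomial

variable {p : ℕ} [Fact p.Prime]

theorem norm_sum_addChar_sum_mul_pow_le {ψ : AddChar (ZMod p) ℂ} (hψ : ψ ≠ 1) {s : ℕ}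
    {h : Fin s → ZMod p} (hh : h ≠ 0) :
    ‖∑ x : ZMod p, ψ (∑ j, h j * x ^ (j.1 + 1))‖ ≤ s * √p := by
  rcases lt_or_ge s p with hsp | hps
  · set f : (ZMod p)[X] := ∑ j, C (h j) * X ^ (j.1 + 1) with hf
    have hcoeff (j : Fin s) : f.coeff (j.1 + 1) = h j := by
      simp [hf, finsetSum_coeff, ← Fin.ext_iff]
    obtain ⟨j, hj⟩ := Function.ne_iff.1 hh
    have hpos : 0 < f.natDegree :=
      j.1.succ_pos.trans_le (le_natDegree_of_ne_zero (by rwa [hcoeff]))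
    have hle : f.natDegree ≤ s := natDegree_sum_le_of_forall_le _ _ fun i _ =>
      (natDegree_C_mul_X_pow_le _ _).trans i.2
    have hcoprime : (Fintype.card (ZMod p)).Coprime f.natDegree := by
      rw [ZMod.card]
      exact Nat.coprime_of_lt_prime hpos.ne' (hle.trans_lt hsp) Fact.out
    have hweil := norm_sum_addChar_eval_le hψ hcoprime
    simp only [hf, eval_finsetSum, eval_mul, eval_C, eval_pow, eval_X] at hweil
    rw [← hf, ZMod.card] at hweil
    refine hweil.trans (mul_le_mul_of_nonneg_right ?_ (Real.sqrt_nonneg _))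
    linarith [(Nat.cast_le (α := ℝ)).2 hle]
  · have hp : (1 : ℝ) ≤ p := mod_cast (Fact.out : p.Prime).one_le
    calc
      _ ≤ ∑ x : ZMod p, ‖ψ (∑ j, h j * x ^ (j.1 + 1))‖ := norm_sum_le _ _
      _ = p * 1 := by simp only [AddChar.norm_apply, sum_const, card_univ, ZMod.card, nsmul_eq_mul]
      _ ≤ s * √p := by
        gcongr
        exact Real.one_le_sqrt.2 hp

end PrimeField

section WienerNorm

open scoped BigOperators

variable {G : Type*} [AddCommGroup G] [Fintype G]

/-- The Fourier coefficient of `f` at the character `ψ`, for the uniform probability measure on the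
finite group `G`. -/
noncomputable def fourierCoeff (f : G → ℝ) (ψ : AddChar G ℂ) : ℂ :=
  𝔼 k, (f k : ℂ) * ψ (-k)

/-- The norm of `f` in the Wiener algebra of `G`: the `ℓ¹` norm of its Fourier coefficients. -/
noncomputable def wienerNorm (f : G → ℝ) : ℝ :=
  ∑ ψ, ‖fourierCoeff f ψ‖

lemma fourierCoeff_zero_right (f : G → ℝ) : fourierCoeff f 0 = 𝔼 k, f k := by
  simp [fourierCoeff]

lemma fourierCoeff_add (f g : G → ℝ) : fourierCoeff (f + g) = fourierCoeff f + fourierCoeff g := by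
  ext ψ
  simp [fourierCoeff, add_mul, expect_add_distrib]

lemma fourierCoeff_smul (r : ℝ) (f : G → ℝ) : fourierCoeff (r • f) = (r : ℂ) • fourierCoeff f := by
  ext ψ
  simp [fourierCoeff, mul_assoc, mul_expect]

lemma fourierCoeff_one (ψ : AddChar G ℂ) : fourierCoeff 1 ψ = if ψ = 0 then 1 else 0 := by
  rw [← AddChar.expect_eq_ite ψ]
  exact Fintype.expect_equiv (Equiv.neg G) _ _ fun k => by simp

lemma sum_fourierCoeff_mul_apply (f : G → ℝ) (k : G) : ∑ ψ, fourierCoeff f ψ * ψ k = f k := by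
  classical
  calc ∑ ψ, fourierCoeff f ψ * ψ k
      = 𝔼 m, (f m : ℂ) * ∑ ψ : AddChar G ℂ, ψ (k - m) := by
        simp only [fourierCoeff, expect_mul, mul_sum, expect_sum_comm]
        refine sum_congr rfl fun ψ _ => expect_congr rfl fun m _ => ?_
        rw [mul_assoc, ← AddChar.map_add_eq_mul, neg_add_eq_sub]
    _ = f k := by
        simp only [AddChar.sum_apply_eq_ite, sub_eq_zero, mul_ite, mul_zero,
          Fintype.expect_eq_sum_div_card]
        simp

lemma sum_norm_fourierCoeff_sq (f : G → ℝ) : ∑ ψ, ‖fourierCoeff f ψ‖ ^ 2 = 𝔼 k, f k ^ 2 := by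
  have hconj (ψ : AddChar G ℂ) : (starRingEnd ℂ) (fourierCoeff f ψ) = 𝔼 k, (f k : ℂ) * ψ k := by
    simp [fourierCoeff, map_expect, AddChar.map_neg_eq_conj]
  have hcomplex : ((∑ ψ, ‖fourierCoeff f ψ‖ ^ 2 : ℝ) : ℂ) = 𝔼 k, (f k : ℂ) ^ 2 := by
    push_cast
    simp only [← Complex.mul_conj', hconj, mul_expect]
    rw [← expect_sum_comm]
    refine expect_congr rfl fun k _ => ?_
    rw [sq, ← sum_fourierCoeff_mul_apply f k, sum_mul]
    refine sum_congr rfl fun ψ _ => ?_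
    rw [sum_fourierCoeff_mul_apply]
    ring
  exact_mod_cast hcomplex

lemma fourierCoeff_convolution (f g : G → ℝ) (ψ : AddChar G ℂ) :
    fourierCoeff (fun k => 𝔼 m, f m * g (k - m)) ψ = fourierCoeff f ψ * fourierCoeff g ψ := by
  simp only [fourierCoeff, Complex.ofReal_expect, expect_mul]
  rw [expect_comm]
  refine expect_congr rfl fun m _ => ?_
  rw [mul_expect]
  refine Fintype.expect_equiv (Equiv.subRight m) _ _ fun k => ?_
  have hsplit : ψ (-k) = ψ (-m) * ψ (-(k - m)) := by
    rw [← AddChar.map_add_eq_mul]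
    congr 1
    abel
  rw [Equiv.subRight_apply, hsplit]
  push_cast
  ring

lemma wienerNorm_nonneg (f : G → ℝ) : 0 ≤ wienerNorm f :=
  sum_nonneg fun _ _ => norm_nonneg _

lemma wienerNorm_add_le (f g : G → ℝ) : wienerNorm (f + g) ≤ wienerNorm f + wienerNorm g := by
  rw [wienerNorm, fourierCoeff_add, wienerNorm, wienerNorm, ← sum_add_distrib]
  exact sum_le_sum fun ψ _ => norm_add_le _ _

lemma wienerNorm_smul (r : ℝ) (f : G → ℝ) : wienerNorm (r • f) = |r| * wienerNorm f := by
  simp [wienerNorm, fourierCoeff_smul, mul_sum]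

lemma wienerNorm_zero : wienerNorm (0 : G → ℝ) = 0 := by
  simp [wienerNorm, fourierCoeff]

lemma wienerNorm_one : wienerNorm (1 : G → ℝ) = 1 := by
  simp [wienerNorm, fourierCoeff_one, apply_ite norm]

lemma wienerNorm_convolution_le (f g : G → ℝ) :
    wienerNorm (fun k => 𝔼 m, f m * g (k - m)) ≤ √(𝔼 k, f k ^ 2) * √(𝔼 k, g k ^ 2) := by
  simp only [wienerNorm, fourierCoeff_convolution, norm_mul]
  simpa only [sum_norm_fourierCoeff_sq] using
    Real.sum_mul_le_sqrt_mul_sqrt univ (fun ψ => ‖fourierCoeff f ψ‖) fun ψ => ‖fourierCoeff g ψ‖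

end WienerNorm

section ProductDiscrepancy

open scoped BigOperators

variable {G ι X : Type*} [Fintype G] [Fintype ι] [Fintype X]

/-- The difference between the mean of `∏ j, f j (y x j)` over the sample points `y x` in `ι → G`
and its mean `∏ j, 𝔼 k, f j k` over the whole group, as a multilinear map in `f`. -/
noncomputable def productDiscrepancy (y : X → ι → G) :
    MultilinearMap ℝ (fun _ : ι => G → ℝ) ℝ :=
  (𝔼 x, (MultilinearMap.mkPiAlgebra ℝ ι ℝ).compLinearMap fun j => LinearMap.proj (y x j)) -
    (MultilinearMap.mkPiAlgebra ℝ ι ℝ).compLinearMap fun _ => 𝔼 k, LinearMap.proj k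

lemma productDiscrepancy_apply (y : X → ι → G) (f : ι → G → ℝ) :
    productDiscrepancy y f = 𝔼 x, ∏ j, f j (y x j) - ∏ j, 𝔼 k, f j k := by
  simp [productDiscrepancy, expect]

lemma abs_productDiscrepancy_le_add {y : X → ι → G} {f g : ι → G → ℝ} (hf : 0 ≤ f) (hfg : f ≤ g) :
    |productDiscrepancy y f| ≤ ∏ j, 𝔼 k, g j k + |productDiscrepancy y g| := by
  have hsample : 𝔼 x, ∏ j, f j (y x j) ≤ 𝔼 x, ∏ j, g j (y x j) :=
    expect_le_expect fun x _ => prod_le_prod (fun j _ => hf j _) fun j _ => hfg j _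
  have hmean : ∏ j, 𝔼 k, f j k ≤ ∏ j, 𝔼 k, g j k :=
    prod_le_prod (fun j _ => expect_nonneg fun k _ => hf j k) fun j _ =>
      expect_le_expect fun k _ => hfg j k
  have hsample_nonneg : 0 ≤ 𝔼 x, ∏ j, f j (y x j) :=
    expect_nonneg fun x _ => prod_nonneg fun j _ => hf j _
  have hmean_nonneg : 0 ≤ ∏ j, 𝔼 k, f j k :=
    prod_nonneg fun j _ => expect_nonneg fun k _ => hf j k
  have habs := le_abs_self (productDiscrepancy y g)
  have habs_nonneg := abs_nonneg (productDiscrepancy y g)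
  rw [productDiscrepancy_apply y g] at habs habs_nonneg ⊢
  rw [productDiscrepancy_apply, abs_le]
  constructor <;> linarith

lemma productDiscrepancy_eq_sum_update [DecidableEq ι] (y : X → ι → G) (f : ι → G → ℝ)
    (j₀ : ι) (n : ℕ) (φ : ℕ → G → ℝ) :
    productDiscrepancy y f =
      ∑ i ∈ range n, productDiscrepancy y (Function.update f j₀ (φ i)) +
        productDiscrepancy y (Function.update f j₀ (f j₀ - ∑ i ∈ range n, φ i)) := by
  rw [← MultilinearMap.map_update_sum, ← MultilinearMap.map_update_add, add_sub_cancel,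
    Function.update_eq_self]

lemma sum_range_pow_sub_le {θ : ℝ} (hθ : 1 < θ) (M : ℕ) :
    ∑ i ∈ range (M + 1), θ ^ (M - i) ≤ θ / (θ - 1) * θ ^ M := by
  have : 0 < θ - 1 := sub_pos.2 hθ
  have hreflect : ∑ i ∈ range (M + 1), θ ^ (M - i) = ∑ i ∈ range (M + 1), θ ^ i :=
    sum_range_reflect (fun i => θ ^ i) (M + 1)
  rw [hreflect, geom_sum_eq hθ.ne', div_mul_eq_mul_div, ← pow_succ']
  gcongr
  exact sub_le_self _ zero_le_one

variable [AddCommGroup G]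

lemma productDiscrepancy_eq_sum_fourierCoeff [Nonempty X] [DecidableEq ι]
    [DecidableEq (ι → AddChar G ℂ)] (y : X → ι → G) (f : ι → G → ℝ) :
    (productDiscrepancy y f : ℂ) =
      ∑ ψ ∈ univ.erase (0 : ι → AddChar G ℂ),
        (∏ j, fourierCoeff (f j) (ψ j)) * 𝔼 x, ∏ j, ψ j (y x j) := by
  have hsample : 𝔼 x, ∏ j, (f j (y x j) : ℂ) =
      ∑ ψ : ι → AddChar G ℂ, (∏ j, fourierCoeff (f j) (ψ j)) * 𝔼 x, ∏ j, ψ j (y x j) := by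
    simp only [← sum_fourierCoeff_mul_apply (f _), prod_univ_sum, Fintype.piFinset_univ,
      prod_mul_distrib, mul_expect]
    exact expect_sum_comm _ _ _
  rw [productDiscrepancy_apply]
  push_cast
  rw [hsample, ← add_sum_erase univ _ (mem_univ 0)]
  simp [fourierCoeff_zero_right]

lemma abs_productDiscrepancy_le [Nonempty X] {y : X → ι → G} {ε : ℝ} (hε : 0 ≤ ε)
    (hy : ∀ ψ : ι → AddChar G ℂ, ψ ≠ 0 → ‖𝔼 x, ∏ j, ψ j (y x j)‖ ≤ ε) (f : ι → G → ℝ) :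
    |productDiscrepancy y f| ≤ (∏ j, wienerNorm (f j)) * ε := by
  classical
  rw [← Real.norm_eq_abs, ← Complex.norm_real, productDiscrepancy_eq_sum_fourierCoeff]
  calc ‖∑ ψ ∈ univ.erase (0 : ι → AddChar G ℂ),
        (∏ j, fourierCoeff (f j) (ψ j)) * 𝔼 x, ∏ j, ψ j (y x j)‖
      ≤ ∑ ψ ∈ univ.erase (0 : ι → AddChar G ℂ), (∏ j, ‖fourierCoeff (f j) (ψ j)‖) * ε := by
        refine (norm_sum_le _ _).trans (sum_le_sum fun ψ hψ => ?_)
        rw [norm_mul, norm_prod]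
        gcongr
        exact hy ψ (ne_of_mem_erase hψ)
    _ ≤ ∑ ψ : ι → AddChar G ℂ, (∏ j, ‖fourierCoeff (f j) (ψ j)‖) * ε :=
        sum_le_sum_of_subset_of_nonneg (erase_subset _ _) fun ψ _ _ => by positivity
    _ = (∏ j, wienerNorm (f j)) * ε := by
        simp only [wienerNorm]
        rw [prod_univ_sum, Fintype.piFinset_univ, sum_mul]

/-- A multiscale decomposition of `g : G → [0, 1]`: nonnegative pieces of bounded Wiener norm whose
means decay geometrically, with partial sums below `g`. The remainder after the `n`-th piece need
not have bounded Wiener norm, but lies below a majorant that does. -/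
structure MultiscaleDecomposition (g : G → ℝ) where
  /-- The piece at scale `2 ^ (-i)`. -/
  piece : ℕ → G → ℝ
  /-- An upper bound for the remainder after piece `n`. -/
  majorant : ℕ → G → ℝ
  le_one : g ≤ 1
  piece_nonneg : ∀ i, 0 ≤ piece i
  sum_piece_le : ∀ n, ∑ i ∈ range (n + 1), piece i ≤ g
  le_sum_piece_add : ∀ n, g ≤ ∑ i ∈ range (n + 1), piece i + majorant n
  wienerNorm_piece_le : ∀ i, wienerNorm (piece i) ≤ 2
  wienerNorm_majorant_le : ∀ n, wienerNorm (majorant n) ≤ 2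
  expect_piece_le : ∀ i, 𝔼 k, piece i k ≤ 2 / 2 ^ i
  expect_majorant_le : ∀ n, 𝔼 k, majorant n k ≤ 2 / 2 ^ n

variable [DecidableEq ι]

lemma prod_compl_update {α : Type*} {j₀ : ι} {w : Finset ι} (hj₀ : j₀ ∉ w) (F : α → ℝ) (f : ι → α)
    (g : α) :
    ∏ j ∈ wᶜ, F (Function.update f j₀ g j) = F g * ∏ j ∈ (insert j₀ w)ᶜ, F (f j) := by
  simp only [Function.apply_update fun _ => F]
  rw [prod_update_of_mem (mem_compl.2 hj₀), compl_insert, sdiff_singleton_eq_erase]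

lemma abs_productDiscrepancy_le_of_le_piecewise [Nonempty X] {y : X → ι → G} {ε : ℝ} (hε : 0 ≤ ε)
    (hy : ∀ ψ : ι → AddChar G ℂ, ψ ≠ 0 → ‖𝔼 x, ∏ j, ψ j (y x j)‖ ≤ ε) {w : Finset ι}
    {f g : ι → G → ℝ} (hf : 0 ≤ f) (hfg : f ≤ w.piecewise (1 : ι → G → ℝ) g) :
    |productDiscrepancy y f| ≤
      ∏ j ∈ wᶜ, 𝔼 k, g j k + (∏ j ∈ wᶜ, wienerNorm (g j)) * ε := by
  have hprod {F : (G → ℝ) → ℝ} (hF : F 1 = 1) :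
      ∏ j, F (w.piecewise (1 : ι → G → ℝ) g j) = ∏ j ∈ wᶜ, F (g j) := by
    rw [← prod_mul_prod_compl w, prod_eq_one fun j hj => ?_, one_mul]
    · exact prod_congr rfl fun j hj => by rw [piecewise_eq_of_notMem _ _ _ (mem_compl.1 hj)]
    · rw [piecewise_eq_of_mem _ _ _ hj, Pi.one_apply, hF]
  refine (abs_productDiscrepancy_le_add hf hfg).trans (add_le_add ?_ ?_)
  · exact (hprod (F := fun h => 𝔼 k, h k) (Fintype.expect_const 1)).le
  · rw [← hprod wienerNorm_one]
    exact abs_productDiscrepancy_le hε hy _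

lemma abs_productDiscrepancy_le_of_update_piece_le {y : X → ι → G} {f : ι → G → ℝ} {j₀ : ι}
    (d : MultiscaleDecomposition (f j₀)) {θ a b : ℝ} (hθ : 1 < θ) (ha : 0 ≤ a) {M : ℕ}
    (hpiece : ∀ i ∈ range (M + 1),
      |productDiscrepancy y (Function.update f j₀ (d.piece i))| ≤ a * θ ^ (M - i))
    (hremainder :
      |productDiscrepancy y (Function.update f j₀ (f j₀ - ∑ i ∈ range (M + 1), d.piece i))| ≤ b) :
    |productDiscrepancy y f| ≤ a * (θ / (θ - 1) * θ ^ M) + b := by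
  rw [productDiscrepancy_eq_sum_update y f j₀ (M + 1) d.piece]
  refine (abs_add_le _ _).trans (add_le_add ?_ hremainder)
  calc _ ≤ ∑ i ∈ range (M + 1), a * θ ^ (M - i) :=
        (abs_sum_le_sum_abs _ _).trans (sum_le_sum hpiece)
    _ ≤ a * (θ / (θ - 1) * θ ^ M) := by
        rw [← mul_sum]
        gcongr
        exact sum_range_pow_sub_le hθ M

lemma prod_compl_update_expect_piece_le {j₀ : ι} {w : Finset ι} (hj₀ : j₀ ∉ w) {f : ι → G → ℝ}
    (hf : 0 ≤ f) (d : MultiscaleDecomposition (f j₀)) {A : ℝ} {i M : ℕ} (hi : i ≤ M)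
    (hmean : ∏ j ∈ (insert j₀ w)ᶜ, 𝔼 k, f j k ≤ A * 2 ^ M) :
    ∏ j ∈ wᶜ, 𝔼 k, Function.update f j₀ (d.piece i) j k ≤ 2 * A * 2 ^ (M - i) := by
  rw [prod_compl_update hj₀ fun g : G → ℝ => 𝔼 k, g k]
  calc _ ≤ 2 / 2 ^ i * (A * 2 ^ M) :=
        mul_le_mul (d.expect_piece_le i) hmean
          (prod_nonneg fun j _ => expect_nonneg fun k _ => hf j k) (by positivity)
    _ = 2 * A * 2 ^ (M - i) := by
        rw [pow_sub₀ _ two_ne_zero hi]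
        ring

section Multiscale

variable [Nonempty X] {y : X → ι → G} {ε : ℝ} (hε : 0 ≤ ε)
  (hy : ∀ ψ : ι → AddChar G ℂ, ψ ≠ 0 → ‖𝔼 x, ∏ j, ψ j (y x j)‖ ≤ ε)

include hε hy

lemma abs_productDiscrepancy_update_remainder_le {j₀ : ι} {w : Finset ι} (hj₀ : j₀ ∉ w)
    {f : ι → G → ℝ} (hf : 0 ≤ f) (hf_le : ∀ j ∈ w, f j ≤ 1) (d : MultiscaleDecomposition (f j₀))
    {B : ℝ} {M : ℕ} (hnorm : ∏ j ∈ (insert j₀ w)ᶜ, wienerNorm (f j) ≤ B)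
    (hmean : ∏ j ∈ (insert j₀ w)ᶜ, 𝔼 k, f j k ≤ B * ε * 2 ^ M) :
    |productDiscrepancy y (Function.update f j₀ (f j₀ - ∑ i ∈ range (M + 1), d.piece i))| ≤
      4 * (B * ε) := by
  set r := f j₀ - ∑ i ∈ range (M + 1), d.piece i
  have hr : 0 ≤ Function.update f j₀ r :=
    le_update_iff.2 ⟨sub_nonneg.2 (d.sum_piece_le M), fun j _ => hf j⟩
  have hle : Function.update f j₀ r ≤
      w.piecewise (1 : ι → G → ℝ) (Function.update f j₀ (d.majorant M)) := by
    refine update_le_iff.2 ⟨?_, fun j hj => ?_⟩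
    · rw [piecewise_eq_of_notMem _ _ _ hj₀, Function.update_self]
      exact sub_le_iff_le_add'.2 (d.le_sum_piece_add M)
    · by_cases hjw : j ∈ w
      · rw [piecewise_eq_of_mem _ _ _ hjw]
        exact hf_le j hjw
      · rw [piecewise_eq_of_notMem _ _ _ hjw, Function.update_of_ne hj]
  have hbound := abs_productDiscrepancy_le_of_le_piecewise hε hy hr hle
  rw [prod_compl_update hj₀ fun g : G → ℝ => 𝔼 k, g k, prod_compl_update hj₀ wienerNorm] at hbound
  have hmean_nonneg : 0 ≤ ∏ j ∈ (insert j₀ w)ᶜ, 𝔼 k, f j k :=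
    prod_nonneg fun j _ => expect_nonneg fun k _ => hf j k
  have hnorm_nonneg : 0 ≤ ∏ j ∈ (insert j₀ w)ᶜ, wienerNorm (f j) :=
    prod_nonneg fun j _ => wienerNorm_nonneg _
  calc _ ≤ 2 / 2 ^ M * (B * ε * 2 ^ M) + 2 * B * ε := by
        refine hbound.trans ?_
        gcongr
        · exact d.expect_majorant_le M
        · exact d.wienerNorm_majorant_le M
    _ = 4 * (B * ε) := by
        field_simp
        ring

theorem abs_productDiscrepancy_le_of_multiscale {θ : ℝ} (hθ : 1 < θ) (w : Finset ι) (M : ℕ)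
    (f : ι → G → ℝ) (hf : 0 ≤ f) (hdec : ∀ j ∈ w, Nonempty (MultiscaleDecomposition (f j)))
    {B : ℝ} (hnorm : ∏ j ∈ wᶜ, wienerNorm (f j) ≤ B)
    (hmean : ∏ j ∈ wᶜ, 𝔼 k, f j k ≤ B * ε * 2 ^ M) :
    |productDiscrepancy y f| ≤ B * ε * (2 * (θ / (θ - 1) + 2)) ^ #w * θ ^ M := by
  have hθ' : 0 < θ / (θ - 1) := div_pos (by linarith) (sub_pos.2 hθ)
  have hθM : 1 ≤ θ ^ M := one_le_pow₀ hθ.le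
  have hB : 0 ≤ B := (prod_nonneg fun j _ => wienerNorm_nonneg _).trans hnorm
  induction w using Finset.induction_on generalizing M f B with
  | empty =>
    rw [compl_empty] at hnorm
    calc |productDiscrepancy y f| ≤ (∏ j, wienerNorm (f j)) * ε := abs_productDiscrepancy_le hε hy f
      _ ≤ B * ε := by gcongr
      _ ≤ B * ε * (2 * (θ / (θ - 1) + 2)) ^ #(∅ : Finset ι) * θ ^ M := by
        rw [card_empty, pow_zero, mul_one]
        exact le_mul_of_one_le_right (by positivity) hθM
  | insert j₀ w hj₀ ih =>
    obtain ⟨d⟩ := hdec j₀ (mem_insert_self _ _)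
    replace hdec : ∀ j ∈ w, Nonempty (MultiscaleDecomposition (f j)) :=
      fun j hj => hdec j (mem_insert_of_mem hj)
    set C := (2 * (θ / (θ - 1) + 2)) ^ #w
    have hC : 1 ≤ C := one_le_pow₀ (by linarith)
    have hpiece (i : ℕ) (hi : i ∈ range (M + 1)) :
        |productDiscrepancy y (Function.update f j₀ (d.piece i))| ≤
          2 * B * ε * C * θ ^ (M - i) := by
      refine ih (M - i) _ (le_update_iff.2 ⟨d.piece_nonneg i, fun j _ => hf j⟩) (fun j hj => ?_)
        ?_ ?_ (one_le_pow₀ hθ.le) (by positivity)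
      · rw [Function.update_of_ne (ne_of_mem_of_not_mem hj hj₀)]
        exact hdec j hj
      · rw [prod_compl_update hj₀ wienerNorm]
        exact mul_le_mul (d.wienerNorm_piece_le i) hnorm
          (prod_nonneg fun j _ => wienerNorm_nonneg _) zero_le_two
      · rw [mul_assoc 2 B ε]
        exact prod_compl_update_expect_piece_le hj₀ hf d (mem_range_succ_iff.1 hi) hmean
    have hremainder := abs_productDiscrepancy_update_remainder_le hε hy hj₀ hf
      (fun j hj => (hdec j hj).elim MultiscaleDecomposition.le_one) d hnorm hmean
    calc |productDiscrepancy y f|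
        ≤ 2 * B * ε * C * (θ / (θ - 1) * θ ^ M) + 4 * (B * ε) :=
          abs_productDiscrepancy_le_of_update_piece_le d hθ (by positivity) hpiece hremainder
      _ ≤ 2 * B * ε * C * (θ / (θ - 1) * θ ^ M) + 4 * (B * ε) * (C * θ ^ M) :=
          add_le_add le_rfl (le_mul_of_one_le_right (by positivity)
            (one_le_mul_of_one_le_of_one_le hC hθM))
      _ = B * ε * (2 * (θ / (θ - 1) + 2)) ^ #(insert j₀ w) * θ ^ M := by
          rw [card_insert_of_notMem hj₀, pow_succ]
          ring

end Multiscale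

end ProductDiscrepancy

section Windows

open scoped BigOperators

variable {N : ℕ}

/-- The interval `[x, y)` of integers seen in `ZMod N`: `window x y k` is the number of its elements
whose residue is `k`. -/
noncomputable def window (x y : ℤ) (k : ZMod N) : ℝ :=
  #((Ico x y).filter fun z : ℤ => (z : ZMod N) = k)

/-- The average of the windows `[x + v, y + v)` over the translations `0 ≤ v < w`: a trapezoid. -/
noncomputable def smoothWindow (x y : ℤ) (w : ℕ) (k : ZMod N) : ℝ :=
  𝔼 v ∈ range w, window (x + v) (y + v) k

lemma window_nonneg (x y : ℤ) : 0 ≤ window (N := N) x y :=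
  fun _ => Nat.cast_nonneg _

lemma smoothWindow_nonneg (x y : ℤ) (w : ℕ) : 0 ≤ smoothWindow (N := N) x y w :=
  fun k => expect_nonneg fun _ _ => window_nonneg _ _ k

lemma window_mono {x x' y y' : ℤ} (hx : x ≤ x') (hy : y' ≤ y) (k : ZMod N) :
    window x' y' k ≤ window x y k :=
  Nat.cast_le.2 (card_le_card (filter_subset_filter _ (Ico_subset_Ico hx hy)))

lemma window_add_window {x y z : ℤ} (hxy : x ≤ y) (hyz : y ≤ z) (k : ZMod N) :
    window x y k + window y z k = window x z k := by
  rw [window, window, window, ← Nat.cast_add, ← card_union_of_disjoint, ← filter_union,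
    Ico_union_Ico_eq_Ico hxy hyz]
  exact disjoint_filter_filter (Ico_disjoint_Ico_consecutive x y z)

lemma window_add_right (x y z : ℤ) (k : ZMod N) :
    window (x + z) (y + z) k = window x y (k - (z : ZMod N)) := by
  rw [window, window, ← map_add_right_Ico, filter_map, card_map]
  simp only [Function.comp_def, addRightEmbedding_apply, Int.cast_add, eq_sub_iff_add_eq]

lemma window_le_one {x y : ℤ} (h : y ≤ x + N) : window (N := N) x y ≤ 1 := by
  intro k
  refine Nat.cast_le_one.2 (card_le_one.2 fun a ha b hb => ?_)
  rw [mem_filter, mem_Ico] at ha hb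
  have hdvd : (N : ℤ) ∣ b - a :=
    (ZMod.intCast_eq_intCast_iff_dvd_sub a b N).1 (ha.2.trans hb.2.symm)
  have := Int.eq_zero_of_abs_lt_dvd hdvd (by rw [abs_lt]; omega)
  omega

lemma smoothWindow_add_smoothWindow {x y z : ℤ} (hxy : x ≤ y) (hyz : y ≤ z) (w : ℕ) (k : ZMod N) :
    smoothWindow x y w k + smoothWindow y z w k = smoothWindow x z w k := by
  rw [smoothWindow, smoothWindow, smoothWindow, ← expect_add_distrib]
  exact expect_congr rfl fun v _ => window_add_window (by omega) (by omega) k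

lemma smoothWindow_two_mul (x y : ℤ) (w : ℕ) (k : ZMod N) :
    smoothWindow x y (2 * w) k = (smoothWindow x y w k + smoothWindow (x + w) (y + w) w k) / 2 := by
  simp only [smoothWindow, expect_eq_sum_div_card, card_range, two_mul, sum_range_add,
    Nat.cast_add, ← add_assoc, add_right_comm _ (w : ℤ)]
  field_simp
  ring

lemma smoothWindow_eq_add_two_mul {x y : ℤ} (hxy : x ≤ y) (w : ℕ) (k : ZMod N) :
    smoothWindow x (y + w) w k = smoothWindow x y (2 * w) k +
      (smoothWindow x (x + w) w k + smoothWindow y (y + w) w k) / 2 := by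
  have hleft := smoothWindow_add_smoothWindow (show x ≤ x + w by omega)
    (show x + w ≤ y + w by omega) w k
  have hright := smoothWindow_add_smoothWindow hxy (show y ≤ y + w by omega) w k
  rw [smoothWindow_two_mul]
  linarith

lemma smoothWindow_le_window (x y : ℤ) {w : ℕ} (hw : 0 < w) (k : ZMod N) :
    smoothWindow x y w k ≤ window x (y + w - 1) k := by
  refine expect_le (nonempty_range_iff.2 hw.ne') fun v hv => ?_
  rw [mem_range] at hv
  exact window_mono (by omega) (by omega) k

lemma window_le_smoothWindow_add {x y : ℤ} (hxy : x ≤ y) {w : ℕ} (hw : 0 < w) (k : ZMod N) :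
    window x (y + w - 1) k ≤ smoothWindow x y w k +
      (smoothWindow (x + 1 - w) x w k + smoothWindow y (y + w - 1) w k) := by
  simp only [smoothWindow, ← expect_add_distrib]
  refine le_expect (nonempty_range_iff.2 hw.ne') fun v hv => ?_
  rw [mem_range] at hv
  have hsplit : window x (x + v) k + window (x + v) (y + v) k + window (y + v) (y + w - 1) k =
      window x (y + w - 1) k := by
    rw [window_add_window (by omega) (by omega), window_add_window (by omega) (by omega)]
  have hleft : window x (x + v) k ≤ window (x + 1 - w + v) (x + v) k :=
    window_mono (by omega) le_rfl k
  have hright : window (y + v) (y + w - 1) k ≤ window (y + v) (y + w - 1 + v) k :=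
    window_mono le_rfl (by omega) k
  linarith

variable [NeZero N]

lemma Ico_zero_natCast (n : ℕ) : Ico (0 : ℤ) n = (range n).map Nat.castEmbedding := by
  rw [← coe_inj, coe_map, range_eq_Ico, coe_Ico, coe_Ico, ← Nat.cast_zero, ← Nat.image_cast_int_Ico]
  rfl

lemma window_zero_left {K : ℕ} (hK : K ≤ N) (k : ZMod N) :
    window 0 K k = if k.val < K then 1 else 0 := by
  have hcast (n : ℕ) (hn : n ∈ range K) : ((n : ℤ) : ZMod N) = k ↔ n = k.val := by
    rw [mem_range] at hn
    rw [Int.cast_natCast, ← ZMod.natCast_zmod_val k, ZMod.natCast_eq_natCast_iff',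
      Nat.mod_eq_of_lt (hn.trans_le hK), Nat.mod_eq_of_lt k.val_lt, ZMod.natCast_zmod_val]
  rw [window, Ico_zero_natCast, filter_map, card_map]
  simp only [Function.comp_def, Nat.castEmbedding_apply]
  rw [filter_congr hcast, filter_eq']
  split_ifs <;> simp_all

lemma sum_window_mul {x y : ℤ} (g : ZMod N → ℝ) :
    ∑ k, window x y k * g k = ∑ z ∈ Ico x y, g (z : ℤ) := by
  simp only [window, card_filter, Nat.cast_sum, Nat.cast_ite, Nat.cast_one, Nat.cast_zero, sum_mul,
    ite_mul, one_mul, zero_mul]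
  rw [sum_comm]
  simp

lemma expect_window {x y : ℤ} (h : x ≤ y) : 𝔼 k : ZMod N, window x y k = (y - x : ℝ) / N := by
  have hsum := sum_window_mul (N := N) (x := x) (y := y) 1
  simp only [Pi.one_apply, mul_one, sum_const, Int.card_Ico, nsmul_eq_mul] at hsum
  rw [Fintype.expect_eq_sum_div_card, hsum, ZMod.card, ← Int.cast_natCast (R := ℝ),
    Int.toNat_of_nonneg (sub_nonneg.2 h), Int.cast_sub]

lemma expect_smoothWindow {x y : ℤ} (h : x ≤ y) {w : ℕ} (hw : 0 < w) :
    𝔼 k : ZMod N, smoothWindow x y w k = (y - x : ℝ) / N := by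
  simp only [smoothWindow]
  rw [expect_comm, ← expect_const (nonempty_range_iff.2 hw.ne') ((y - x : ℝ) / N)]
  refine expect_congr rfl fun v _ => ?_
  rw [expect_window (by omega)]
  push_cast
  rw [add_sub_add_right_eq_sub]

lemma expect_window_sq_le {x y : ℤ} (h : x ≤ y) (hN : y ≤ x + N) :
    𝔼 k : ZMod N, window x y k ^ 2 ≤ (y - x : ℝ) / N := by
  rw [← expect_window h]
  exact expect_le_expect fun k _ =>
    pow_le_of_le_one (window_nonneg x y k) (window_le_one hN k) two_ne_zero

lemma smoothWindow_eq_convolution (x y : ℤ) (w : ℕ) :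
    smoothWindow x y w =
      ((N / w : ℝ) • fun k : ZMod N => 𝔼 m, window 0 w m * window x y (k - m)) := by
  ext k
  have hN : (N : ℝ) ≠ 0 := NeZero.ne _
  rw [Pi.smul_apply, Fintype.expect_eq_sum_div_card, sum_window_mul fun m => window x y (k - m),
    Ico_zero_natCast, sum_map, smoothWindow, expect_eq_sum_div_card, ZMod.card, card_range,
    smul_eq_mul]
  simp only [window_add_right, Nat.castEmbedding_apply, Int.cast_natCast]
  field_simp

lemma wienerNorm_smoothWindow_le {x y : ℤ} (h : x ≤ y) (hN : y ≤ x + N) {w : ℕ} (hw : 0 < w)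
    (hwN : w ≤ N) : wienerNorm (smoothWindow (N := N) x y w) ≤ √((y - x : ℝ) / w) := by
  have hw0 : (0 : ℝ) < w := Nat.cast_pos.2 hw
  have hN0 : (0 : ℝ) < N := Nat.cast_pos.2 (NeZero.pos N)
  have hbase : 𝔼 m : ZMod N, window 0 w m ^ 2 ≤ (w : ℝ) / N := by
    simpa using expect_window_sq_le (N := N) (x := 0) (y := w) (by omega) (by omega)
  calc wienerNorm (smoothWindow (N := N) x y w)
      ≤ N / w * (√(𝔼 m : ZMod N, window 0 w m ^ 2) * √(𝔼 m : ZMod N, window x y m ^ 2)) := by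
        rw [smoothWindow_eq_convolution, wienerNorm_smul, abs_of_pos (div_pos hN0 hw0)]
        gcongr
        exact wienerNorm_convolution_le _ _
    _ ≤ N / w * (√(w / N) * √((y - x) / N)) := by
        gcongr
        exact expect_window_sq_le h hN
    _ = √((y - x : ℝ) / w) := by
        rw [← Real.sqrt_mul (by positivity), ← Real.sqrt_sq (div_nonneg hN0.le hw0.le),
          ← Real.sqrt_mul (by positivity)]
        congr 1
        field_simp

lemma wienerNorm_smoothWindow_le_one {x y : ℤ} {w : ℕ} (h : x ≤ y) (hyx : y ≤ x + w) (hw : 0 < w)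
    (hwN : w ≤ N) : wienerNorm (smoothWindow (N := N) x y w) ≤ 1 := by
  refine (wienerNorm_smoothWindow_le h (by omega) hw hwN).trans (Real.sqrt_le_one.2 ?_)
  rw [div_le_one (by positivity), sub_le_iff_le_add']
  exact_mod_cast hyx

end Windows

section WindowDecomposition

open scoped BigOperators

variable {N : ℕ}

/-- The width of the trapezoid that approximates the window `[0, K)` at scale `2 ^ (-i)`. It is `1`
from `i = Nat.log 2 K` on, where the subtraction truncates. -/
def windowScale (K i : ℕ) : ℕ :=
  2 ^ (Nat.log 2 K - i)

/-- The pieces of the multiscale decomposition of the window `[0, K)`: the increments of the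
trapezoids with base `[0, K)` whose slopes have width `windowScale K i`. -/
noncomputable def windowPiece (K : ℕ) : ℕ → ZMod N → ℝ
  | 0 => smoothWindow 0 (K + 1 - windowScale K 0) (windowScale K 0)
  | i + 1 => smoothWindow 0 (K + 1 - windowScale K (i + 1)) (windowScale K (i + 1)) -
      smoothWindow 0 (K + 1 - windowScale K i) (windowScale K i)

/-- Upper bound for the difference of the window `[0, K)` and its trapezoid of width
`windowScale K n`. -/
noncomputable def windowMajorant (K n : ℕ) : ZMod N → ℝ :=
  smoothWindow (1 - windowScale K n) 0 (windowScale K n) +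
    smoothWindow (K + 1 - windowScale K n) K (windowScale K n)

lemma windowScale_pos (K i : ℕ) : 0 < windowScale K i :=
  Nat.two_pow_pos _

lemma windowScale_le_max (K i : ℕ) : windowScale K i ≤ max K 1 := by
  refine (Nat.pow_le_pow_right two_pos (Nat.sub_le _ i)).trans ?_
  rcases K.eq_zero_or_pos with rfl | hK
  · simp
  · exact (Nat.pow_log_le_self 2 hK.ne').trans (le_max_left _ _)

lemma windowScale_sub_one_mul_le (K i : ℕ) : (windowScale K i - 1 : ℝ) * 2 ^ i ≤ K := by
  rcases le_total i (Nat.log 2 K) with hi | hi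
  · have hprod : windowScale K i * 2 ^ i = windowScale K 0 := by
      rw [windowScale, windowScale, ← pow_add, Nat.sub_add_cancel hi, Nat.sub_zero]
    have hmax : windowScale K 0 ≤ K + 1 := (windowScale_le_max K 0).trans (by omega)
    calc (windowScale K i - 1 : ℝ) * 2 ^ i = windowScale K 0 - 2 ^ i := by
          rw [← hprod]
          push_cast
          ring
      _ ≤ (K + 1 : ℝ) - 1 := sub_le_sub (mod_cast hmax) (one_le_pow₀ one_le_two)
      _ = K := add_sub_cancel_right _ _
  · simp [windowScale, Nat.sub_eq_zero_of_le hi]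

lemma windowScale_eq_two_mul {K i : ℕ} (hi : i < Nat.log 2 K) :
    windowScale K i = 2 * windowScale K (i + 1) := by
  rw [windowScale, windowScale, ← pow_succ']
  congr 1
  omega

lemma sum_windowPiece (K n : ℕ) : ∑ i ∈ range (n + 1), windowPiece (N := N) K i =
    smoothWindow 0 (K + 1 - windowScale K n) (windowScale K n) := by
  induction n with
  | zero => simp [windowPiece]
  | succ n ih => rw [sum_range_succ, ih, windowPiece, add_sub_cancel]

lemma windowPiece_succ_of_lt {K i : ℕ} (hi : i < Nat.log 2 K) :
    windowPiece (N := N) K (i + 1) = (2⁻¹ : ℝ) •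
      (smoothWindow 0 (windowScale K (i + 1)) (windowScale K (i + 1)) +
        smoothWindow (K + 1 - windowScale K i) (K + 1 - windowScale K (i + 1))
          (windowScale K (i + 1))) := by
  have hscale := windowScale_eq_two_mul hi
  have hle := windowScale_le_max K i
  ext k
  have hrec := smoothWindow_eq_add_two_mul (x := 0) (y := K + 1 - windowScale K i) (by omega)
    (windowScale K (i + 1)) k
  have hright : (K + 1 - windowScale K i + windowScale K (i + 1) : ℤ) =
      K + 1 - windowScale K (i + 1) := by omega
  rw [hright, zero_add, ← hscale] at hrec
  simp only [windowPiece, Pi.sub_apply, Pi.smul_apply, Pi.add_apply, smul_eq_mul, hrec]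
  ring

lemma windowPiece_succ_of_le {K i : ℕ} (hi : Nat.log 2 K ≤ i) :
    windowPiece (N := N) K (i + 1) = 0 := by
  rw [windowPiece, windowScale, windowScale, Nat.sub_eq_zero_of_le hi,
    Nat.sub_eq_zero_of_le (hi.trans i.le_succ), sub_self]

variable [NeZero N]

lemma windowScale_le {K : ℕ} (hK : K ≤ N) (i : ℕ) : windowScale K i ≤ N :=
  (windowScale_le_max K i).trans (max_le hK (NeZero.one_le))

lemma windowScale_sub_one_div_le {K : ℕ} (hK : K ≤ N) (i : ℕ) :
    (windowScale K i - 1 : ℝ) / N ≤ 1 / 2 ^ i := by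
  rw [div_le_div_iff₀ (Nat.cast_pos.2 (NeZero.pos N)) (by positivity), one_mul]
  exact (windowScale_sub_one_mul_le K i).trans (Nat.cast_le.2 hK)

lemma wienerNorm_windowPiece_le {K : ℕ} (hK : K ≤ N) (i : ℕ) :
    wienerNorm (windowPiece (N := N) K i) ≤ 1 := by
  rcases i with _ | i
  · have hlog : K < 2 * windowScale K 0 := by
      rw [windowScale, Nat.sub_zero, ← pow_succ']
      exact Nat.lt_pow_succ_log_self one_lt_two K
    have hmax := windowScale_le_max K 0
    exact wienerNorm_smoothWindow_le_one (by omega) (by omega) (windowScale_pos K 0)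
      (windowScale_le hK 0)
  rcases lt_or_ge i (Nat.log 2 K) with hi | hi
  · have hw := windowScale_le hK (i + 1)
    have hpos := windowScale_pos K (i + 1)
    have hscale := windowScale_eq_two_mul hi
    rw [windowPiece_succ_of_lt hi, wienerNorm_smul, abs_of_pos (by norm_num)]
    calc _ ≤ 2⁻¹ * (1 + 1 : ℝ) := by
          gcongr
          refine (wienerNorm_add_le _ _).trans (add_le_add ?_ ?_) <;>
            exact wienerNorm_smoothWindow_le_one (by omega) (by omega) hpos hw
      _ = 1 := by norm_num
  · rw [windowPiece_succ_of_le hi, wienerNorm_zero]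
    exact zero_le_one

lemma wienerNorm_windowMajorant_le {K : ℕ} (hK : K ≤ N) (n : ℕ) :
    wienerNorm (windowMajorant (N := N) K n) ≤ 2 := by
  have hpos := windowScale_pos K n
  rw [← one_add_one_eq_two]
  refine (wienerNorm_add_le _ _).trans (add_le_add ?_ ?_) <;>
    exact wienerNorm_smoothWindow_le_one (by omega) (by omega) hpos (windowScale_le hK n)

lemma expect_windowPiece_le {K : ℕ} (hK : K ≤ N) (i : ℕ) :
    𝔼 k : ZMod N, windowPiece K i k ≤ 2 / 2 ^ i := by
  have hN : (0 : ℝ) < N := Nat.cast_pos.2 (NeZero.pos N)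
  rcases i with _ | i
  · have hpos := windowScale_pos K 0
    have hmax := windowScale_le_max K 0
    rw [windowPiece, expect_smoothWindow (by omega) hpos, pow_zero, div_one]
    refine (div_le_one_of_le₀ ?_ hN.le).trans one_le_two
    have : (K + 1 - windowScale K 0 - 0 : ℤ) ≤ N := by omega
    exact_mod_cast this
  rcases lt_or_ge i (Nat.log 2 K) with hi | hi
  · have hpos := windowScale_pos K (i + 1)
    have hscale := windowScale_eq_two_mul hi
    simp only [windowPiece_succ_of_lt hi, Pi.smul_apply, Pi.add_apply, smul_eq_mul, ← mul_expect,
      expect_add_distrib]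
    rw [expect_smoothWindow (by omega) hpos, expect_smoothWindow (by omega) hpos]
    calc _ = (windowScale K (i + 1) : ℝ) / N := by
          rw [hscale]
          push_cast
          ring
      _ ≤ (windowScale K i - 1 : ℝ) / N := by
          gcongr
          exact_mod_cast (by omega : (windowScale K (i + 1) : ℤ) ≤ windowScale K i - 1)
      _ ≤ 1 / 2 ^ i := windowScale_sub_one_div_le hK i
      _ = 2 / 2 ^ (i + 1) := by
          rw [pow_succ]
          field_simp
  · simp only [windowPiece_succ_of_le hi, Pi.zero_apply, expect_const_zero]
    positivity

lemma expect_windowMajorant_le {K : ℕ} (hK : K ≤ N) (n : ℕ) :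
    𝔼 k : ZMod N, windowMajorant K n k ≤ 2 / 2 ^ n := by
  have hpos := windowScale_pos K n
  simp only [windowMajorant, Pi.add_apply, expect_add_distrib]
  rw [expect_smoothWindow (by omega) hpos, expect_smoothWindow (by omega) hpos]
  calc _ = 2 * ((windowScale K n - 1 : ℝ) / N) := by
        push_cast
        ring
    _ ≤ 2 * (1 / 2 ^ n) := mul_le_mul_of_nonneg_left (windowScale_sub_one_div_le hK n) zero_le_two
    _ = 2 / 2 ^ n := mul_one_div _ _

/-- The multiscale decomposition of the window `[0, K)` by increments of trapezoids. -/
noncomputable def windowDecomposition {K : ℕ} (hK : K ≤ N) :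
    MultiscaleDecomposition (window (N := N) 0 K) where
  piece := windowPiece K
  majorant := windowMajorant K
  le_one := window_le_one (by omega)
  piece_nonneg
    | 0 => smoothWindow_nonneg _ _ _
    | i + 1 => by
      rcases lt_or_ge i (Nat.log 2 K) with hi | hi
      · rw [windowPiece_succ_of_lt hi]
        exact smul_nonneg (by norm_num)
          (add_nonneg (smoothWindow_nonneg _ _ _) (smoothWindow_nonneg _ _ _))
      · rw [windowPiece_succ_of_le hi]
  sum_piece_le n k := by
    rw [sum_windowPiece]
    convert smoothWindow_le_window 0 (K + 1 - windowScale K n) (windowScale_pos K n) k using 2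
    ring
  le_sum_piece_add n k := by
    have hmax := windowScale_le_max K n
    rw [sum_windowPiece]
    convert window_le_smoothWindow_add (x := 0) (y := K + 1 - windowScale K n) (by omega)
      (windowScale_pos K n) k using 2
    · ring
    · simp [windowMajorant]
  wienerNorm_piece_le i := (wienerNorm_windowPiece_le hK i).trans one_le_two
  wienerNorm_majorant_le := wienerNorm_windowMajorant_le hK
  expect_piece_le := expect_windowPiece_le hK
  expect_majorant_le := expect_windowMajorant_le hK

end WindowDecomposition

section LocalDiscrepancy

open scoped BigOperators

lemma addChar_sum_eq_prod {A M ι : Type*} [AddCommMonoid A] [CommMonoid M] (ψ : AddChar A M)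
    (u : Finset ι) (f : ι → A) : ψ (∑ i ∈ u, f i) = ∏ i ∈ u, ψ (f i) :=
  map_prod ψ.toMonoidHom (fun i => Multiplicative.ofAdd (f i)) u

lemma exists_mulShift_eq {R : Type*} [CommRing R] [Finite R] {ψ : AddChar R ℂ}
    (hψ : ψ.IsPrimitive) (φ : AddChar R ℂ) : ∃ r, AddChar.mulShift ψ r = φ := by
  have := Fintype.ofFinite R
  exact ((Fintype.bijective_iff_injective_and_card _).2
    ⟨AddChar.to_mulShift_inj_of_isPrimitive hψ, AddChar.card_eq.symm⟩).2 φ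

lemma norm_prod_sub_prod_le {ι R : Type*} [NormedCommRing R] [NormOneClass R] (u : Finset ι)
    {a b : ι → R} (ha : ∀ j ∈ u, ‖a j‖ ≤ 1) (hb : ∀ j ∈ u, ‖b j‖ ≤ 1) :
    ‖∏ j ∈ u, a j - ∏ j ∈ u, b j‖ ≤ ∑ j ∈ u, ‖a j - b j‖ := by
  classical
  induction u using Finset.induction_on with
  | empty => simp
  | insert i u hi ih =>
    rw [forall_mem_insert] at ha hb
    have hprod : ‖∏ j ∈ u, b j‖ ≤ 1 :=
      (Finset.norm_prod_le _ _).trans (prod_le_one (fun j _ => norm_nonneg _) hb.2)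
    rw [prod_insert hi, prod_insert hi, sum_insert hi]
    calc ‖a i * ∏ j ∈ u, a j - b i * ∏ j ∈ u, b j‖
        = ‖(a i - b i) * ∏ j ∈ u, b j + a i * (∏ j ∈ u, a j - ∏ j ∈ u, b j)‖ := by
          congr 1
          ring
      _ ≤ ‖a i - b i‖ * 1 + 1 * ‖∏ j ∈ u, a j - ∏ j ∈ u, b j‖ :=
          (norm_add_le _ _).trans (add_le_add
            ((norm_mul_le _ _).trans (mul_le_mul_of_nonneg_left hprod (norm_nonneg _)))
            ((norm_mul_le _ _).trans (mul_le_mul_of_nonneg_right ha.1 (norm_nonneg _))))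
      _ ≤ ‖a i - b i‖ + ∑ j ∈ u, ‖a j - b j‖ := by
          rw [mul_one, one_mul]
          exact add_le_add le_rfl (ih ha.2 hb.2)

lemma abs_ceil_div_sub_le {z : ℝ} (hz : 0 ≤ z) {n : ℕ} (hn : 0 < n) :
    |(⌈z * n⌉₊ : ℝ) / n - z| ≤ 1 / n := by
  have hn0 : (0 : ℝ) < n := Nat.cast_pos.2 hn
  rw [div_sub' hn0.ne', mul_comm _ z, abs_div, abs_of_pos hn0]
  gcongr
  rw [abs_of_nonneg (sub_nonneg.2 (Nat.le_ceil _)), sub_le_iff_le_add']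
  exact (Nat.ceil_lt_add_one (by positivity)).le

lemma inv_sqrt_mul_rpow_le {x δ : ℝ} (hx : 1 ≤ x) (hδ : 0 ≤ δ) :
    (√x)⁻¹ * (2 * √x) ^ δ ≤ 2 ^ δ * x ^ (-(1 / 2 - δ)) := by
  have hx0 : 0 ≤ x := zero_le_one.trans hx
  calc (√x)⁻¹ * (2 * √x) ^ δ = 2 ^ δ * (x ^ (-(1 / 2) : ℝ) * x ^ (1 / 2 * δ)) := by
        rw [Real.mul_rpow zero_le_two (Real.sqrt_nonneg x), Real.sqrt_eq_rpow, Real.rpow_neg hx0,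
          Real.rpow_mul hx0, mul_left_comm]
    _ = 2 ^ δ * x ^ (-(1 / 2) + 1 / 2 * δ) := by rw [Real.rpow_add (by linarith)]
    _ ≤ 2 ^ δ * x ^ (-(1 / 2 - δ)) := by
        exact mul_le_mul_of_nonneg_left (Real.rpow_le_rpow_of_exponent_le hx (by linarith))
          (by positivity)

lemma ceil_mul_natCast_le {z : ℝ} (hz : z ≤ 1) {n : ℕ} : ⌈z * n⌉₊ ≤ n :=
  Nat.ceil_le.2 (mul_le_of_le_one_left n.cast_nonneg hz)

section

variable {p s : ℕ}

lemma fract_pow_div_lt_iff [NeZero p] (n m : ℕ) (z : ℝ) :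
    Int.fract ((n : ℝ) ^ m / p) < z ↔ ((n : ZMod p) ^ m).val < ⌈z * p⌉₊ := by
  have hp : (0 : ℝ) < p := Nat.cast_pos.2 (NeZero.pos p)
  rw [← Nat.cast_pow, ← Nat.cast_pow, Int.fract_div_natCast_eq_div_natCast_mod, ZMod.val_natCast,
    Nat.lt_ceil, div_lt_iff₀ hp]

/-- The factors of the indicator function of the box `[0, (z_u, 1))`, read on the residues `k`
of the points `k / p`. -/
noncomputable def boxFactor (u : Finset (Fin s)) (z : Fin s → ℝ) (j : Fin s) : ZMod p → ℝ :=
  if j ∈ u then window 0 ⌈z j * p⌉₊ else 1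

lemma boxFactor_of_mem {u : Finset (Fin s)} {z : Fin s → ℝ} {j : Fin s} (hj : j ∈ u) :
    boxFactor (p := p) u z j = window 0 ⌈z j * p⌉₊ :=
  if_pos hj

lemma boxFactor_of_notMem {u : Finset (Fin s)} {z : Fin s → ℝ} {j : Fin s} (hj : j ∉ u) :
    boxFactor (p := p) u z j = 1 :=
  if_neg hj

lemma boxFactor_nonneg (u : Finset (Fin s)) (z : Fin s → ℝ) : 0 ≤ boxFactor (p := p) u z := by
  intro j
  by_cases hj : j ∈ u
  · rw [boxFactor_of_mem hj]
    exact window_nonneg _ _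
  · rw [boxFactor_of_notMem hj]
    exact zero_le_one

lemma prod_compl_boxFactor {F : (ZMod p → ℝ) → ℝ} (hF : F 1 = 1) (u : Finset (Fin s))
    (z : Fin s → ℝ) : ∏ j ∈ uᶜ, F (boxFactor u z j) = 1 :=
  prod_eq_one fun j hj => by rw [boxFactor_of_notMem (mem_compl.1 hj), hF]

section

variable [NeZero p]

lemma bijective_natCast_fin : Function.Bijective fun n : Fin p => (n.1 : ZMod p) := by
  refine (Fintype.bijective_iff_injective_and_card _).2 ⟨fun m n h => Fin.ext ?_, by simp⟩
  simpa [Nat.mod_eq_of_lt, m.2, n.2] using congrArg ZMod.val h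

lemma boxFactor_natCast_pow {z : Fin s → ℝ} (hz : ∀ j, z j ≤ 1) (u : Finset (Fin s)) (n : Fin p)
    (j : Fin s) : boxFactor u z j ((n.1 : ZMod p) ^ (j.1 + 1)) =
      if korobovP p s n j < projPoint u z j then 1 else 0 := by
  by_cases hj : j ∈ u
  · rw [boxFactor_of_mem hj, window_zero_left (ceil_mul_natCast_le (hz j)), projPoint, if_pos hj]
    simp only [korobovP, fract_pow_div_lt_iff]
  · rw [boxFactor_of_notMem hj, projPoint, if_neg hj, korobovP, if_pos (Int.fract_lt_one _),
      Pi.one_apply]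

lemma localDisc_korobovP_projPoint {z : Fin s → ℝ} (hz : ∀ j, z j ≤ 1) (u : Finset (Fin s)) :
    localDisc (korobovP p s) (projPoint u z) =
      𝔼 x : ZMod p, ∏ j, boxFactor u z j (x ^ (j.1 + 1)) - ∏ j ∈ u, z j := by
  have hbox (n : Fin p) : (if ∀ j, korobovP p s n j < projPoint u z j then (1 : ℝ) else 0) =
      ∏ j, boxFactor u z j ((n.1 : ZMod p) ^ (j.1 + 1)) := by
    simp only [boxFactor_natCast_pow hz, prod_ite_zero, prod_const_one, mem_univ, true_imp_iff]
  have hvolume : ∏ j, projPoint u z j = ∏ j ∈ u, z j := by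
    simp only [projPoint, prod_ite_mem, univ_inter]
  rw [localDisc, hvolume, ← Fintype.expect_bijective _ bijective_natCast_fin _ _ hbox,
    Fintype.expect_eq_sum_div_card, sum_boole, Fintype.card_fin]

lemma prod_expect_boxFactor (u : Finset (Fin s)) (z : Fin s → ℝ) :
    ∏ j, 𝔼 k : ZMod p, boxFactor u z j k = ∏ j ∈ u, (⌈z j * p⌉₊ / p : ℝ) := by
  have hmem {j : Fin s} (hj : j ∈ u) :
      𝔼 k : ZMod p, boxFactor u z j k = (⌈z j * p⌉₊ / p : ℝ) := by
    rw [boxFactor_of_mem hj, expect_window (Nat.cast_nonneg _)]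
    simp
  rw [← prod_mul_prod_compl u, prod_congr rfl fun j hj => hmem hj,
    prod_compl_boxFactor (F := fun g => 𝔼 k, g k) (Fintype.expect_const 1), mul_one]

lemma abs_prod_ceil_div_sub_le {z : Fin s → ℝ} (hz : ∀ j, z j ∈ Set.Icc (0 : ℝ) 1)
    (u : Finset (Fin s)) :
    |∏ j ∈ u, (⌈z j * p⌉₊ / p : ℝ) - ∏ j ∈ u, z j| ≤ s / p := by
  have hp : 0 < p := NeZero.pos p
  calc |∏ j ∈ u, (⌈z j * p⌉₊ / p : ℝ) - ∏ j ∈ u, z j|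
      ≤ ∑ j ∈ u, |(⌈z j * p⌉₊ / p : ℝ) - z j| := by
        refine norm_prod_sub_prod_le (R := ℝ) u (fun j _ => ?_) fun j _ => ?_
        · rw [Real.norm_of_nonneg (by positivity)]
          exact div_le_one_of_le₀ (mod_cast ceil_mul_natCast_le (hz j).2) p.cast_nonneg
        · rw [Real.norm_of_nonneg (hz j).1]
          exact (hz j).2
    _ ≤ #u * (1 / p : ℝ) := by
        rw [← nsmul_eq_mul]
        exact sum_le_card_nsmul _ _ _ fun j _ => abs_ceil_div_sub_le (hz j).1 hp
    _ ≤ s / p := by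
        rw [mul_one_div]
        gcongr
        simpa using card_le_univ u

end

variable [Fact p.Prime]

lemma norm_expect_prod_addChar_pow_le {ψ : Fin s → AddChar (ZMod p) ℂ} (hψ : ψ ≠ 0) :
    ‖𝔼 x : ZMod p, ∏ j, ψ j (x ^ (j.1 + 1))‖ ≤ s / √p := by
  have hprim := ZMod.isPrimitive_stdAddChar p
  have hp : (0 : ℝ) < p := mod_cast (Fact.out : p.Prime).pos
  choose h hh using fun j => exists_mulShift_eq hprim (ψ j)
  obtain rfl : (fun j => AddChar.mulShift ZMod.stdAddChar (h j)) = ψ := funext hh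
  have hne : h ≠ 0 := by
    rintro rfl
    exact hψ (funext fun _ => AddChar.mulShift_zero _)
  simp only [AddChar.mulShift_apply, ← addChar_sum_eq_prod]
  rw [Fintype.expect_eq_sum_div_card, norm_div, ZMod.card, Complex.norm_natCast]
  calc _ ≤ s * √p / p := by
        gcongr
        exact norm_sum_addChar_sum_mul_pow_le
          (by simpa only [AddChar.mulShift_one] using hprim one_ne_zero) hne
    _ = s / √p := by
        rw [div_eq_div_iff hp.ne' (Real.sqrt_pos.2 hp).ne', mul_assoc, Real.mul_self_sqrt hp.le]

lemma abs_productDiscrepancy_boxFactor_le (hs : 1 ≤ s) {δ : ℝ} (hδ : 0 < δ) {z : Fin s → ℝ}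
    (hz : ∀ j, z j ≤ 1) (u : Finset (Fin s)) :
    |productDiscrepancy (fun (x : ZMod p) (j : Fin s) => x ^ (j.1 + 1)) (boxFactor u z)| ≤
      s / √p * (2 * (2 ^ δ / (2 ^ δ - 1) + 2)) ^ #u * (2 * √p) ^ δ := by
  have hθ : 0 < (2 : ℝ) ^ δ / (2 ^ δ - 1) :=
    div_pos (by positivity) (sub_pos.2 (Real.one_lt_rpow one_lt_two hδ))
  have hp : 1 ≤ √(p : ℝ) := Real.one_le_sqrt.2 (mod_cast (Fact.out : p.Prime).one_le)
  obtain ⟨m, hm, hm'⟩ := exists_nat_pow_near hp one_lt_two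
  have hmain := abs_productDiscrepancy_le_of_multiscale (M := m + 1) (B := 1)
    (y := fun (x : ZMod p) (j : Fin s) => x ^ (j.1 + 1)) (ε := s / √p) (by positivity)
    (fun ψ hψ => norm_expect_prod_addChar_pow_le hψ) (Real.one_lt_rpow one_lt_two hδ) u
    (f := boxFactor u z) (boxFactor_nonneg u z) (fun j hj => ?_)
    (prod_compl_boxFactor wienerNorm_one u z).le ?_
  · rw [one_mul] at hmain
    refine hmain.trans (mul_le_mul_of_nonneg_left ?_ (by positivity))
    rw [← Real.rpow_natCast, ← Real.rpow_mul zero_le_two, mul_comm δ, Real.rpow_mul zero_le_two,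
      Real.rpow_natCast, pow_succ']
    gcongr
  · rw [boxFactor_of_mem hj]
    exact ⟨windowDecomposition (ceil_mul_natCast_le (hz j))⟩
  · rw [prod_compl_boxFactor (F := fun g => 𝔼 k, g k) (Fintype.expect_const 1), one_mul,
      div_mul_eq_mul_div, one_le_div (zero_lt_one.trans_le hp)]
    exact hm'.le.trans (le_mul_of_one_le_left (by positivity) (mod_cast hs))

theorem abs_localDisc_korobovP_le (hs : 1 ≤ s) {δ : ℝ} (hδ : 0 < δ) {z : Fin s → ℝ}
    (hz : ∀ j, z j ∈ Set.Icc (0 : ℝ) 1) (u : Finset (Fin s)) :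
    |localDisc (korobovP p s) (projPoint u z)| ≤
      (2 ^ δ + 1) * (2 * (2 ^ δ / (2 ^ δ - 1) + 2)) ^ #u * s * (p : ℝ) ^ (-(1 / 2 - δ)) := by
  have hp : (1 : ℝ) ≤ p := mod_cast (Fact.out : p.Prime).one_le
  set D : ℝ := 2 * (2 ^ δ / (2 ^ δ - 1) + 2)
  have hD : 1 ≤ D := by
    have := div_pos (by positivity : (0 : ℝ) < 2 ^ δ)
      (sub_pos.2 (Real.one_lt_rpow one_lt_two hδ))
    linarith
  have hvolume : (s / p : ℝ) ≤ D ^ #u * s * (p : ℝ) ^ (-(1 / 2 - δ)) := by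
    rw [div_eq_mul_inv, ← Real.rpow_neg_one]
    refine mul_le_mul (le_mul_of_one_le_left s.cast_nonneg (one_le_pow₀ hD))
      (Real.rpow_le_rpow_of_exponent_le hp (by linarith)) (by positivity) (by positivity)
  rw [localDisc_korobovP_projPoint fun j => (hz j).2]
  calc _ ≤ |productDiscrepancy (fun (x : ZMod p) (j : Fin s) => x ^ (j.1 + 1)) (boxFactor u z)| +
        |∏ j ∈ u, (⌈z j * p⌉₊ / p : ℝ) - ∏ j ∈ u, z j| := by
        rw [productDiscrepancy_apply, prod_expect_boxFactor]
        exact abs_sub_le _ _ _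
    _ ≤ s / √p * D ^ #u * (2 * √p) ^ δ + s / p :=
        add_le_add (abs_productDiscrepancy_boxFactor_le hs hδ (fun j => (hz j).2) u)
          (abs_prod_ceil_div_sub_le hz u)
    _ = D ^ #u * s * ((√p)⁻¹ * (2 * √p) ^ δ) + s / p := by ring
    _ ≤ D ^ #u * s * (2 ^ δ * (p : ℝ) ^ (-(1 / 2 - δ))) +
        D ^ #u * s * (p : ℝ) ^ (-(1 / 2 - δ)) :=
        add_le_add (mul_le_mul_of_nonneg_left (inv_sqrt_mul_rpow_le hp hδ.le) (by positivity))
          hvolume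
    _ = (2 ^ δ + 1) * D ^ #u * s * (p : ℝ) ^ (-(1 / 2 - δ)) := by ring

end

end LocalDiscrepancy

open Filter in
lemma exists_weightOf_mul_pow_le {γ : ℕ → ℝ} (hγ : ∀ j, 1 ≤ j → 0 ≤ γ j)
    (hγ₀ : Tendsto γ atTop (nhds 0)) {D : ℝ} (hD : 0 < D) :
    ∃ C : ℝ, 0 < C ∧ ∀ (s : ℕ) (u : Finset (Fin s)), weightOf γ u * D ^ #u ≤ C := by
  obtain ⟨N, hN⟩ := eventually_atTop.1 (hγ₀.eventually (gt_mem_nhds (inv_pos.2 hD)))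
  set m : ℕ → ℝ := fun j => max 1 (γ (j + 1) * D)
  have hm (j : ℕ) : 1 ≤ m j := le_max_left _ _
  have hm_tail (j : ℕ) (hj : j ∉ range N) : m j = 1 := by
    rw [mem_range, not_lt] at hj
    exact max_eq_left ((lt_inv_mul_iff₀' hD).1 (by simpa using hN (j + 1) (by omega))).le
  refine ⟨∏ j ∈ range N, m j, prod_pos fun j _ => zero_lt_one.trans_le (hm j), fun s u => ?_⟩
  calc weightOf γ u * D ^ #u = ∏ j ∈ u, γ (j.1 + 1) * D := by
        rw [weightOf, prod_mul_distrib, prod_const]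
    _ ≤ ∏ j ∈ u, m j.1 := prod_le_prod (fun j _ => mul_nonneg (hγ _ j.1.succ_pos) hD.le)
        fun j _ => le_max_right _ _
    _ = ∏ j ∈ u.map Fin.valEmbedding, m j := (prod_map u Fin.valEmbedding m).symm
    _ ≤ ∏ j ∈ range N ∪ u.map Fin.valEmbedding, m j :=
        prod_mono_set_of_one_le hm subset_union_right
    _ = ∏ j ∈ range N, m j :=
        (prod_subset subset_union_left fun j _ hj => hm_tail j hj).symm

open Filter in
lemma tendsto_zero_of_summable_rpow {γ : ℕ → ℝ} (hγ : ∀ j, 0 ≤ γ j) {τ : ℝ} (hτ : 0 < τ)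
    (hsum : Summable fun j => γ j ^ τ) : Tendsto γ atTop (nhds 0) := by
  simpa only [Real.zero_rpow (inv_pos.2 hτ).ne', Real.rpow_rpow_inv (hγ _) hτ.ne'] using
    hsum.tendsto_atTop_zero.rpow_const (.inr (inv_nonneg.2 hτ.le))

end Korobov

open Filter in
theorem wStarDisc_korobovP_le_of_tau_general (γ : ℕ → ℝ) (hγ : ∀ j, 1 ≤ j → 0 ≤ γ j)
    (hγ₀ : Tendsto γ atTop (nhds 0)) (δ : ℝ) (hδ : 0 < δ) :
    ∃ C : ℝ, 0 < C ∧ ∀ p s : ℕ, p.Prime → 1 ≤ s →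
      wStarDisc γ (korobovP p s) ≤ C * (s : ℝ) * (p : ℝ) ^ (-(1 / 2 - δ) : ℝ) := by
  set D : ℝ := 2 * (2 ^ δ / (2 ^ δ - 1) + 2)
  have hθ : 0 < (2 : ℝ) ^ δ - 1 := sub_pos.2 (Real.one_lt_rpow one_lt_two hδ)
  obtain ⟨C, hC, hweight⟩ :=
    Korobov.exists_weightOf_mul_pow_le hγ hγ₀ (show 0 < D by positivity)
  refine ⟨C * (2 ^ δ + 1), by positivity, fun p s hp hs => Real.sSup_le ?_ (by positivity)⟩
  rintro d ⟨z, hz, u, -, rfl⟩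
  have : Fact p.Prime := ⟨hp⟩
  calc weightOf γ u * |localDisc (korobovP p s) (projPoint u z)|
      ≤ weightOf γ u * ((2 ^ δ + 1) * D ^ #u * s * (p : ℝ) ^ (-(1 / 2 - δ))) :=
        mul_le_mul_of_nonneg_left (Korobov.abs_localDisc_korobovP_le hs hδ hz u)
          (prod_nonneg fun j _ => hγ _ j.1.succ_pos)
    _ = weightOf γ u * D ^ #u * ((2 ^ δ + 1) * s * (p : ℝ) ^ (-(1 / 2 - δ))) := by ring
    _ ≤ C * ((2 ^ δ + 1) * s * (p : ℝ) ^ (-(1 / 2 - δ))) :=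
        mul_le_mul_of_nonneg_right (hweight s u) (by positivity)
    _ = C * (2 ^ δ + 1) * s * (p : ℝ) ^ (-(1 / 2 - δ)) := by ring

/-- for non-increasing nonnegative weights with `∑_j γ_j^τ < ∞` for some
`τ > 0`, and any `δ > 0`, `D*_γ(P_{p,s}) ≤ C s p^{−(1/2−δ)}` with `C` independent of
the prime `p` and of `s`. -/
theorem wStarDisc_korobovP_le_of_tau (γ : ℕ → ℝ) (hγ : ∀ j, 1 ≤ j → 0 ≤ γ j)
    (hdec : ∀ j, 1 ≤ j → γ (j + 1) ≤ γ j)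
    (hsum : ∃ τ : ℝ, 0 < τ ∧ Summable fun j => γ (j + 1) ^ τ) (δ : ℝ) (hδ : 0 < δ) :
    ∃ C : ℝ, 0 < C ∧ ∀ p s : ℕ, p.Prime → 1 ≤ s →
      wStarDisc γ (korobovP p s) ≤ C * (s : ℝ) * (p : ℝ) ^ (-(1 / 2 - δ) : ℝ) := by
  obtain ⟨τ, hτ, hsummable⟩ := hsum
  exact wStarDisc_korobovP_le_of_tau_general γ hγ ((Filter.tendsto_add_atTop_iff_nat 1).1
    (Korobov.tendsto_zero_of_summable_rpow (fun j => hγ _ j.succ_pos) hτ hsummable)) δ hδ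
end

section
/- There exists a constant C > 0 and a sequence (u_n)_{n≥1} of real numbers in [0,1] such that for all s ∈ ℕ and all N ∈ ℕ with N ≥ 2, the point set {u^{(s)}_1, …, u^{(s)}_N} ⊂ [0,1]^s, where u^{(s)}_n = (u_{(n−1)s+1}, u_{(n−1)s+2}, …, u_{ns}), has star-discrepancy at most C·√(s·log N)/√N. -/
open Finset

/-- Star-discrepancy `D*(x) = sup_{t ∈ [0,1]^s} |Δ(t)|`. -/
noncomputable def starDisc {N s : ℕ} (x : Fin N → Fin s → ℝ) : ℝ :=
  sSup {d : ℝ | ∃ t : Fin s → ℝ, (∀ j, t j ∈ Set.Icc (0:ℝ) 1) ∧ d = |localDisc x t|}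

/-!
Take the `u_n` independent and uniform on `[0,1]`, so that the blocks of length `s` are independent
and uniform on the cube. At a fixed corner the local discrepancy of `N` blocks is at least
`2√(s log N)/√N` with probability at most `2 N^(-8s)`, by Hoeffding's inequality. The fewer than
`N^(3s)` corners of the grid of mesh `1/N²` control all corners up to `s/N²`, so for each pair
`(s, N)` the bound with constant `3` fails with probability at most `2 N^(-5s)`: for `s ≤ N` by the
union bound over the grid, for `N ≤ s` because the claimed bound exceeds `1`. These probabilities
have sum less than `1` over all `s ≥ 1` and `N ≥ 2`, so a single sequence avoids all failures.
-/

open MeasureTheory ProbabilityTheory unitInterval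
open scoped NNReal

section StarDiscrepancy

lemma norm_prod_sub_prod_le_sum {ι R : Type*} [NormedCommRing R] [NormOneClass R]
    {a b : ι → R} (S : Finset ι) (ha : ∀ i ∈ S, ‖a i‖ ≤ 1) (hb : ∀ i ∈ S, ‖b i‖ ≤ 1) :
    ‖∏ i ∈ S, b i - ∏ i ∈ S, a i‖ ≤ ∑ i ∈ S, ‖b i - a i‖ := by
  classical
  induction S using Finset.induction_on with
  | empty => simp
  | insert i S hi ih =>
    simp only [forall_mem_insert] at ha hb
    rw [prod_insert hi, prod_insert hi, sum_insert hi]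
    have hprod : ‖∏ j ∈ S, b j‖ ≤ 1 :=
      (S.norm_prod_le b).trans (prod_le_one (fun _ _ ↦ norm_nonneg _) hb.2)
    calc ‖b i * ∏ j ∈ S, b j - a i * ∏ j ∈ S, a j‖
        = ‖(b i - a i) * ∏ j ∈ S, b j + a i * (∏ j ∈ S, b j - ∏ j ∈ S, a j)‖ := by
          congr 1; ring
      _ ≤ ‖b i - a i‖ * ‖∏ j ∈ S, b j‖ + ‖a i‖ * ‖∏ j ∈ S, b j - ∏ j ∈ S, a j‖ :=
          (norm_add_le _ _).trans (add_le_add (norm_mul_le _ _) (norm_mul_le _ _))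
      _ ≤ ‖b i - a i‖ + ∑ j ∈ S, ‖b j - a j‖ :=
          add_le_add (mul_le_of_le_one_right (norm_nonneg _) hprod)
            ((mul_le_of_le_one_left (norm_nonneg _) ha.1).trans (ih ha.2 hb.2))

lemma prod_sub_prod_le_card_mul {ι : Type*} [Fintype ι] {a b : ι → ℝ} {δ : ℝ}
    (ha : ∀ i, a i ∈ Set.Icc (0 : ℝ) 1) (hb : ∀ i, b i ∈ Set.Icc (0 : ℝ) 1)
    (hab : ∀ i, |b i - a i| ≤ δ) :
    ∏ i, b i - ∏ i, a i ≤ Fintype.card ι * δ := by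
  have norm_le_one {c : ℝ} (hc : c ∈ Set.Icc (0 : ℝ) 1) : ‖c‖ ≤ 1 := by
    rw [Real.norm_of_nonneg hc.1]; exact hc.2
  calc ∏ i, b i - ∏ i, a i ≤ ‖∏ i, b i - ∏ i, a i‖ := Real.le_norm_self _
    _ ≤ ∑ i, ‖b i - a i‖ :=
        norm_prod_sub_prod_le_sum univ (fun i _ ↦ norm_le_one (ha i)) fun i _ ↦ norm_le_one (hb i)
    _ ≤ ∑ _i : ι, δ := sum_le_sum fun i _ ↦ hab i
    _ = Fintype.card ι * δ := by simp

variable {N s : ℕ} {x : Fin N → Fin s → ℝ}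

lemma abs_localDisc_le_one (x : Fin N → Fin s → ℝ) {t : Fin s → ℝ}
    (ht : ∀ j, t j ∈ Set.Icc (0 : ℝ) 1) : |localDisc x t| ≤ 1 := by
  have hcard : (#{n | ∀ j, x n j < t j} : ℝ) ≤ N := by
    exact_mod_cast card_finset_fin_le _
  have hfreq : (#{n | ∀ j, x n j < t j} : ℝ) / N ≤ 1 := div_le_one_of_le₀ hcard N.cast_nonneg
  have hfreq₀ : 0 ≤ (#{n | ∀ j, x n j < t j} : ℝ) / N := by positivity
  have hvol : ∏ j, t j ≤ 1 := prod_le_one (fun j _ ↦ (ht j).1) fun j _ ↦ (ht j).2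
  have hvol₀ : 0 ≤ ∏ j, t j := prod_nonneg fun j _ ↦ (ht j).1
  rw [localDisc, abs_le]
  constructor <;> linarith

lemma starDisc_le_of_forall {d : ℝ}
    (h : ∀ t : Fin s → ℝ, (∀ j, t j ∈ Set.Icc (0 : ℝ) 1) → |localDisc x t| ≤ d) :
    starDisc x ≤ d := by
  refine csSup_le ⟨_, 0, fun _ ↦ by simp, rfl⟩ ?_
  rintro _ ⟨t, ht, rfl⟩
  exact h t ht

lemma starDisc_le_one (x : Fin N → Fin s → ℝ) : starDisc x ≤ 1 :=
  starDisc_le_of_forall fun _ ↦ abs_localDisc_le_one x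

lemma abs_localDisc_le_of_bracket {a t b : Fin s → ℝ} {ε δ : ℝ} (hat : a ≤ t) (htb : t ≤ b)
    (ha : |localDisc x a| ≤ ε) (hb : |localDisc x b| ≤ ε)
    (hat_vol : ∏ j, t j - ∏ j, a j ≤ δ) (htb_vol : ∏ j, b j - ∏ j, t j ≤ δ) :
    |localDisc x t| ≤ ε + δ := by
  have freq_mono {c d : Fin s → ℝ} (hcd : c ≤ d) :
      (#{n | ∀ j, x n j < c j} : ℝ) / N ≤ (#{n | ∀ j, x n j < d j} : ℝ) / N := by
    gcongr with n _ j
    exact hcd j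
  have hlower := freq_mono hat
  have hupper := freq_mono htb
  simp only [localDisc, abs_le] at ha hb ⊢
  constructor <;> linarith [ha.1, hb.2]

/-- The grid `{0, 1/m, …, m/m}^s` of mesh `1/m` in the unit cube, used to replace the supremum over
all corners in the star-discrepancy by a finite maximum. -/
noncomputable def unitGrid (s m : ℕ) : Finset (Fin s → ℝ) :=
  Fintype.piFinset fun _ ↦ (range (m + 1)).image fun k : ℕ ↦ (k : ℝ) / m

lemma card_unitGrid_le (s m : ℕ) : #(unitGrid s m) ≤ (m + 1) ^ s := by
  rw [unitGrid, Fintype.card_piFinset_const]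
  gcongr
  exact card_image_le.trans_eq (card_range _)

variable {m : ℕ} {t : Fin s → ℝ}

lemma mem_unitGrid : t ∈ unitGrid s m ↔ ∀ j, ∃ k ≤ m, (k : ℝ) / m = t j := by
  simp [unitGrid, Fintype.mem_piFinset]

lemma mem_Icc_of_mem_unitGrid (ht : t ∈ unitGrid s m) (j : Fin s) : t j ∈ Set.Icc (0 : ℝ) 1 := by
  obtain ⟨k, hk, hkt⟩ := mem_unitGrid.1 ht j
  rw [← hkt]
  exact ⟨by positivity, div_le_one_of_le₀ (by exact_mod_cast hk) m.cast_nonneg⟩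

lemma exists_mem_unitGrid_le (hm : 0 < m) (ht : ∀ j, t j ∈ Set.Icc (0 : ℝ) 1) :
    ∃ a ∈ unitGrid s m, a ≤ t ∧ ∀ j, t j - a j ≤ 1 / m := by
  have hm' : (0 : ℝ) < m := by exact_mod_cast hm
  refine ⟨fun j ↦ (⌊m * t j⌋₊ : ℝ) / m, mem_unitGrid.2 fun j ↦ ⟨_, ?_, rfl⟩, fun j ↦ ?_, fun j ↦ ?_⟩
  · exact Nat.floor_le_of_le (mul_le_of_le_one_right hm'.le (ht j).2)
  · rw [div_le_iff₀' hm']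
    exact Nat.floor_le (mul_nonneg hm'.le (ht j).1)
  · rw [sub_le_iff_le_add', ← add_div, le_div_iff₀' hm']
    exact (Nat.lt_floor_add_one _).le

lemma exists_mem_unitGrid_ge (hm : 0 < m) (ht : ∀ j, t j ∈ Set.Icc (0 : ℝ) 1) :
    ∃ b ∈ unitGrid s m, t ≤ b ∧ ∀ j, b j - t j ≤ 1 / m := by
  have hm' : (0 : ℝ) < m := by exact_mod_cast hm
  refine ⟨fun j ↦ (⌈m * t j⌉₊ : ℝ) / m, mem_unitGrid.2 fun j ↦ ⟨_, ?_, rfl⟩, fun j ↦ ?_, fun j ↦ ?_⟩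
  · exact Nat.ceil_le.2 (mul_le_of_le_one_right hm'.le (ht j).2)
  · rw [le_div_iff₀' hm']
    exact Nat.le_ceil _
  · rw [sub_le_iff_le_add', ← sub_le_iff_le_add, ← sub_div, div_le_iff₀' hm',
      sub_le_iff_le_add]
    exact (Nat.ceil_lt_add_one (mul_nonneg hm'.le (ht j).1)).le

lemma starDisc_le_of_forall_unitGrid (hm : 0 < m) {ε : ℝ}
    (h : ∀ t ∈ unitGrid s m, |localDisc x t| ≤ ε) : starDisc x ≤ ε + s / m := by
  refine starDisc_le_of_forall fun t ht ↦ ?_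
  obtain ⟨a, ha, hat, hat_dist⟩ := exists_mem_unitGrid_le hm ht
  obtain ⟨b, hb, htb, htb_dist⟩ := exists_mem_unitGrid_ge hm ht
  refine abs_localDisc_le_of_bracket hat htb (h a ha) (h b hb) ?_ ?_
  · simpa [div_eq_mul_inv] using prod_sub_prod_le_card_mul (mem_Icc_of_mem_unitGrid ha) ht
      fun j ↦ (abs_of_nonneg (sub_nonneg.2 (hat j))).trans_le (hat_dist j)
  · simpa [div_eq_mul_inv] using prod_sub_prod_le_card_mul ht (mem_Icc_of_mem_unitGrid hb)
      fun j ↦ (abs_of_nonneg (sub_nonneg.2 (htb j))).trans_le (htb_dist j)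

end StarDiscrepancy

section Concentration

variable {Ω : Type*} {mΩ : MeasurableSpace Ω} {P : Measure Ω}

lemma measureReal_abs_sum_ge_le_of_iIndepFun {ι : Type*} {X : ι → Ω → ℝ} {c : ι → ℝ≥0}
    {S : Finset ι} (hindep : iIndepFun X P) (hX : ∀ i ∈ S, HasSubgaussianMGF (X i) (c i) P)
    {ε : ℝ} (hε : 0 ≤ ε) :
    P.real {ω | ε ≤ |∑ i ∈ S, X i ω|} ≤ 2 * Real.exp (-ε ^ 2 / (2 * ∑ i ∈ S, c i)) := by
  have := hindep.isProbabilityMeasure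
  have hupper := HasSubgaussianMGF.measure_sum_ge_le_of_iIndepFun hindep hX hε
  have hlower := HasSubgaussianMGF.measure_sum_ge_le_of_iIndepFun
    (hindep.comp (fun _ y ↦ -y) fun _ ↦ measurable_neg) (fun i hi ↦ (hX i hi).neg) hε
  have hsplit : {ω | ε ≤ |∑ i ∈ S, X i ω|} =
      {ω | ε ≤ ∑ i ∈ S, X i ω} ∪ {ω | ε ≤ ∑ i ∈ S, ((fun y ↦ -y) ∘ X i) ω} := by
    ext ω
    simp [le_abs]
  rw [hsplit, two_mul]
  exact (measureReal_union_le _ _).trans (add_le_add hupper hlower)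

lemma hasSubgaussianMGF_indicator_sub {α : Type*} [MeasurableSpace α] [IsProbabilityMeasure P]
    {ν : Measure α} {Y : Ω → α} (hlaw : HasLaw Y ν P) {B : Set α} (hB : MeasurableSet B) :
    HasSubgaussianMGF (fun ω ↦ B.indicator 1 (Y ω) - ν.real B) (1 / 4) P := by
  have hmeas : Measurable (B.indicator (1 : α → ℝ)) := measurable_one.indicator hB
  have hmean : P[fun ω ↦ B.indicator (1 : α → ℝ) (Y ω)] = ν.real B := by
    rw [← integral_indicator_one hB]
    exact hlaw.integral_comp hmeas.aestronglyMeasurable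
  have hoeffding := hasSubgaussianMGF_of_mem_Icc (μ := P) (a := 0) (b := 1)
    (hmeas.comp_aemeasurable hlaw.aemeasurable)
    (.of_forall fun ω ↦ ⟨Set.indicator_nonneg (by simp) _, Set.indicator_le_self' (by simp) _⟩)
  convert hoeffding using 1
  · simp [hmean]
  · norm_num

lemma measureReal_abs_frequency_sub_ge_le {ι α : Type*} [Fintype ι] [MeasurableSpace α]
    {ν : Measure α} {Y : ι → Ω → α} (hindep : iIndepFun Y P) (hlaw : ∀ i, HasLaw (Y i) ν P)
    {B : Set α} [DecidablePred (· ∈ B)] (hB : MeasurableSet B) {ε : ℝ} (hε : 0 ≤ ε) :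
    P.real {ω | ε ≤ |(#{i | Y i ω ∈ B} : ℝ) / Fintype.card ι - ν.real B|} ≤
      2 * Real.exp (-2 * Fintype.card ι * ε ^ 2) := by
  have := hindep.isProbabilityMeasure
  rcases isEmpty_or_nonempty ι with hι | hι
  · exact measureReal_le_one.trans (by simp)
  have hcard : (0 : ℝ) < Fintype.card ι := by exact_mod_cast Fintype.card_pos
  have hind : iIndepFun (fun i ω ↦ B.indicator 1 (Y i ω) - ν.real B) P :=
    hindep.comp (fun _ y ↦ B.indicator 1 y - ν.real B)
      fun _ ↦ (measurable_one.indicator hB).sub_const _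
  have hsum (ω : Ω) : ∑ i, (B.indicator 1 (Y i ω) - ν.real B) =
      Fintype.card ι * ((#{i | Y i ω ∈ B} : ℝ) / Fintype.card ι - ν.real B) := by
    rw [mul_sub, mul_div_cancel₀ _ hcard.ne']
    simp [Set.indicator_apply]
  have hexponent : -(Fintype.card ι * ε) ^ 2 / (2 * ((∑ _i : ι, 1 / 4 : ℝ≥0) : ℝ)) =
      -2 * Fintype.card ι * ε ^ 2 := by
    rw [sum_const, card_univ, nsmul_eq_mul]
    push_cast
    field_simp
    ring
  have htail := measureReal_abs_sum_ge_le_of_iIndepFun (S := univ) hind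
    (fun i _ ↦ hasSubgaussianMGF_indicator_sub (hlaw i) hB) (mul_nonneg hcard.le hε)
  simpa only [hsum, abs_mul, Nat.abs_cast, mul_le_mul_iff_right₀ hcard, hexponent] using htail

lemma iIndepFun_curry {ι κ α : Type*} [MeasurableSpace α] {X : ι → κ → Ω → α}
    (hX : ∀ i j, Measurable (X i j)) (hindep : iIndepFun (fun p : ι × κ ↦ X p.1 p.2) P) :
    iIndepFun (fun i ω j ↦ X i j ω) P := by
  have := hindep.isProbabilityMeasure
  have (i : ι) (j : κ) : IsProbabilityMeasure (P.map (X i j)) :=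
    Measure.isProbabilityMeasure_map (hX i j).aemeasurable
  have hrow (i : ι) : P.map (fun ω j ↦ X i j ω) = Measure.infinitePi fun j ↦ P.map (X i j) :=
    (hindep.precomp (Prod.mk_right_injective i)).map_fun_eq_infinitePi_map (hX i)
  have hjoint : P.map (fun ω (p : ι × κ) ↦ X p.1 p.2 ω) =
      Measure.infinitePi fun p : ι × κ ↦ P.map (X p.1 p.2) :=
    hindep.map_fun_eq_infinitePi_map fun p ↦ hX p.1 p.2
  rw [iIndepFun_iff_map_fun_eq_infinitePi_map (by fun_prop)]
  simp only [hrow]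
  rw [← Measure.infinitePi_map_curry, ← hjoint, Measure.map_map (by fun_prop) (by fun_prop)]
  rfl

end Concentration

section RandomPoints

variable {Ω : Type*} {mΩ : MeasurableSpace Ω} {P : Measure Ω} {N s : ℕ}

lemma measureReal_volume_pi_Iio {ι : Type*} [Fintype ι] (t : ι → I) :
    (volume : Measure (ι → I)).real (Set.univ.pi fun j ↦ Set.Iio (t j)) = ∏ j, (t j : ℝ) := by
  simp [measureReal_def, volume_pi_pi, ENNReal.toReal_prod, unitInterval.volume_Iio,
    ENNReal.toReal_ofReal (unitInterval.nonneg _)]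

variable {Y : Fin N → Ω → Fin s → I}

lemma measureReal_abs_localDisc_ge_le (hindep : iIndepFun Y P) (hlaw : ∀ n, HasLaw (Y n) volume P)
    {t : Fin s → ℝ} (ht : ∀ j, t j ∈ Set.Icc (0 : ℝ) 1) {ε : ℝ} (hε : 0 ≤ ε) :
    P.real {ω | ε ≤ |localDisc (fun n j ↦ (Y n ω j : ℝ)) t|} ≤
      2 * Real.exp (-2 * N * ε ^ 2) := by
  classical
  let corner : Fin s → I := fun j ↦ ⟨t j, ht j⟩
  have h := measureReal_abs_frequency_sub_ge_le hindep hlaw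
    (MeasurableSet.univ_pi fun j ↦ measurableSet_Iio (a := corner j)) hε
  simpa [measureReal_volume_pi_Iio, localDisc, corner, Set.mem_pi, ← Subtype.coe_lt_coe] using h

lemma measureReal_starDisc_gt_le (hindep : iIndepFun Y P) (hlaw : ∀ n, HasLaw (Y n) volume P)
    {m : ℕ} (hm : 0 < m) {ε : ℝ} (hε : 0 ≤ ε) :
    P.real {ω | ε + s / m < starDisc fun n j ↦ (Y n ω j : ℝ)} ≤
      (m + 1) ^ s * (2 * Real.exp (-2 * N * ε ^ 2)) := by
  have := hindep.isProbabilityMeasure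
  have hsubset : {ω | ε + s / m < starDisc fun n j ↦ (Y n ω j : ℝ)} ⊆
      ⋃ t ∈ unitGrid s m, {ω | ε ≤ |localDisc (fun n j ↦ (Y n ω j : ℝ)) t|} := by
    intro ω hω
    by_contra hgrid
    simp only [Set.mem_iUnion, Set.mem_ofPred_eq, not_exists, not_le] at hgrid
    exact hω.not_ge (starDisc_le_of_forall_unitGrid hm fun t ht ↦ (hgrid t ht).le)
  calc P.real {ω | ε + s / m < starDisc fun n j ↦ (Y n ω j : ℝ)}
      ≤ ∑ t ∈ unitGrid s m, P.real {ω | ε ≤ |localDisc (fun n j ↦ (Y n ω j : ℝ)) t|} :=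
        (measureReal_mono hsubset (measure_ne_top _ _)).trans (measureReal_biUnion_finset_le _ _)
    _ ≤ #(unitGrid s m) • (2 * Real.exp (-2 * N * ε ^ 2)) :=
        sum_le_card_nsmul _ _ _ fun t ht ↦
          measureReal_abs_localDisc_ge_le hindep hlaw (mem_Icc_of_mem_unitGrid ht) hε
    _ ≤ (m + 1) ^ s * (2 * Real.exp (-2 * N * ε ^ 2)) := by
        rw [nsmul_eq_mul]
        gcongr
        exact_mod_cast card_unitGrid_le s m

/-- The rate `√(s log N)/√N` of the theorem. -/
noncomputable def discRate (s N : ℕ) : ℝ := √(s * Real.log N) / √N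

lemma discRate_nonneg (s N : ℕ) : 0 ≤ discRate s N := by
  unfold discRate
  positivity

lemma mul_discRate_sq (s : ℕ) (hN : 0 < N) : N * discRate s N ^ 2 = s * Real.log N := by
  rw [discRate, div_pow, Real.sq_sqrt (mul_nonneg s.cast_nonneg (Real.log_natCast_nonneg N)),
    Real.sq_sqrt N.cast_nonneg]
  field_simp

lemma half_mul_le_mul_discRate_sq (s : ℕ) (hN : 2 ≤ N) : (s : ℝ) / 2 ≤ N * discRate s N ^ 2 := by
  have hlog : 1 / 2 ≤ Real.log N := by
    linarith [Real.log_two_gt_d9, Real.log_le_log two_pos (Nat.ofNat_le_cast (α := ℝ).2 hN)]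
  rw [mul_discRate_sq s (by omega), div_eq_mul_one_div]
  gcongr

lemma one_div_le_discRate (hs : 1 ≤ s) (hN : 2 ≤ N) : 1 / (N : ℝ) ≤ discRate s N := by
  have hN' : (2 : ℝ) ≤ N := by exact_mod_cast hN
  have hs' : (1 : ℝ) ≤ s := by exact_mod_cast hs
  have hrate := half_mul_le_mul_discRate_sq s hN
  refine (sq_le_sq₀ (by positivity) (discRate_nonneg s N)).1 ?_
  rw [div_pow, one_pow, div_le_iff₀ (by positivity)]
  nlinarith

lemma one_le_three_mul_discRate (hNs : N ≤ s) (hN : 2 ≤ N) : 1 ≤ 3 * discRate s N := by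
  have hN' : (2 : ℝ) ≤ N := by exact_mod_cast hN
  have hNs' : (N : ℝ) ≤ s := by exact_mod_cast hNs
  have hrate := half_mul_le_mul_discRate_sq s hN
  have hsq : 1 / 2 ≤ discRate s N ^ 2 := by nlinarith
  nlinarith [discRate_nonneg s N]

lemma grid_union_bound_le (s : ℕ) (hN : 2 ≤ N) :
    ((N : ℝ) ^ 2 + 1) ^ s * (2 * Real.exp (-2 * N * (2 * discRate s N) ^ 2)) ≤
      2 / (N : ℝ) ^ (5 * s) := by
  have hN' : (2 : ℝ) ≤ N := by exact_mod_cast hN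
  have hN₀ : (0 : ℝ) < N := by linarith
  have hexp : Real.exp (-2 * N * (2 * discRate s N) ^ 2) = ((N : ℝ) ^ (8 * s))⁻¹ := by
    have harg : -2 * N * (2 * discRate s N) ^ 2 = -((8 * s : ℕ) * Real.log N) := by
      push_cast
      linear_combination (-8 : ℝ) * mul_discRate_sq s (by omega : 0 < N)
    rw [harg, Real.exp_neg, Real.exp_nat_mul, Real.exp_log hN₀]
  have hcard : ((N : ℝ) ^ 2 + 1) ^ s ≤ (N : ℝ) ^ (3 * s) := by
    rw [pow_mul]
    gcongr
    nlinarith [sq_nonneg (N : ℝ)]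
  calc ((N : ℝ) ^ 2 + 1) ^ s * (2 * Real.exp (-2 * N * (2 * discRate s N) ^ 2))
      ≤ (N : ℝ) ^ (3 * s) * (2 * ((N : ℝ) ^ (8 * s))⁻¹) := by rw [hexp]; gcongr
    _ = 2 / (N : ℝ) ^ (5 * s) := by
        rw [show 8 * s = 3 * s + 5 * s by ring, pow_add]
        field_simp

lemma measureReal_starDisc_gt_rate_le (hindep : iIndepFun Y P)
    (hlaw : ∀ n, HasLaw (Y n) volume P) (hs : 1 ≤ s) (hN : 2 ≤ N) :
    P.real {ω | 3 * discRate s N < starDisc fun n j ↦ (Y n ω j : ℝ)} ≤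
      2 / (N : ℝ) ^ (5 * s) := by
  have := hindep.isProbabilityMeasure
  rcases le_total s N with hsN | hNs
  · have hmesh : (s : ℝ) / (N ^ 2 : ℕ) ≤ discRate s N := by
      refine le_trans ?_ (one_div_le_discRate hs hN)
      rw [div_le_div_iff₀ (by positivity) (by positivity)]
      exact_mod_cast (by nlinarith : s * N ≤ 1 * N ^ 2)
    have hsubset : {ω | 3 * discRate s N < starDisc fun n j ↦ (Y n ω j : ℝ)} ⊆
        {ω | 2 * discRate s N + s / (N ^ 2 : ℕ) < starDisc fun n j ↦ (Y n ω j : ℝ)} :=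
      fun ω (hω : 3 * discRate s N < _) ↦ lt_of_le_of_lt (by linarith) hω
    have htail := measureReal_starDisc_gt_le hindep hlaw (m := N ^ 2) (by positivity)
      (mul_nonneg zero_le_two (discRate_nonneg s N))
    push_cast at htail hsubset
    exact (measureReal_mono hsubset).trans (htail.trans (grid_union_bound_le s hN))
  · have hempty : {ω | 3 * discRate s N < starDisc fun n j ↦ (Y n ω j : ℝ)} = ∅ :=
      Set.eq_empty_of_forall_notMem fun ω hω ↦
        hω.not_ge ((starDisc_le_one _).trans (one_le_three_mul_discRate hNs hN))
    rw [hempty, measureReal_empty]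
    positivity

end RandomPoints

section RandomSequence

variable {Ω : Type*} {mΩ : MeasurableSpace Ω} {P : Measure Ω}

/-- The first `N` consecutive non-overlapping blocks of length `s` of a sequence `u₁, u₂, …`
(the value `u 0` is ignored). -/
def blocks {α : Type*} (u : ℕ → α) (N s : ℕ) (n : Fin N) (j : Fin s) : α :=
  u (n.1 * s + j.1 + 1)

lemma injective_block_index (N s : ℕ) :
    Function.Injective fun p : Fin N × Fin s ↦ p.1.1 * s + p.2.1 + 1 := by
  intro p q (hpq : p.1.1 * s + p.2.1 + 1 = q.1.1 * s + q.2.1 + 1)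
  refine finProdFinEquiv.injective (Fin.ext ?_)
  simp only [finProdFinEquiv_apply_val, mul_comm s]
  omega

variable {α : Type*} [MeasurableSpace α] {X : ℕ → Ω → α}

lemma iIndepFun_blocks (hX : ∀ k, Measurable (X k)) (hindep : iIndepFun X P) (N s : ℕ) :
    iIndepFun (fun n ω ↦ blocks (X · ω) N s n) P :=
  iIndepFun_curry (X := blocks X N s) (fun _ _ ↦ hX _) (hindep.precomp (injective_block_index N s))

lemma hasLaw_blocks {ν : Measure α} (hindep : iIndepFun X P) (hlaw : ∀ k, HasLaw (X k) ν P)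
    {N s : ℕ} (n : Fin N) :
    HasLaw (fun ω ↦ blocks (X · ω) N s n) (Measure.pi fun _ ↦ ν) P :=
  (hindep.precomp ((injective_block_index N s).comp (Prod.mk_right_injective n))).hasLaw_pi
    fun _ ↦ hlaw _

lemma exists_forall_notMem_of_tsum_measure_lt_one [IsProbabilityMeasure P] {ι : Type*}
    [Countable ι] {A : ι → Set Ω} (hA : ∑' i, P (A i) < 1) : ∃ ω, ∀ i, ω ∉ A i := by
  by_contra! hcover
  have hunion : ⋃ i, A i = Set.univ := Set.iUnion_eq_univ_iff.2 hcover
  have := (measure_iUnion_le A).trans_lt hA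
  simp [hunion] at this

lemma hasSum_one_div_add_two_sq :
    HasSum (fun n : ℕ ↦ 1 / ((n + 2 : ℕ) : ℝ) ^ 2) (Real.pi ^ 2 / 6 - 1) := by
  simpa [sum_range_succ] using (hasSum_nat_add_iff' 2).2 hasSum_zeta_two

lemma two_div_pow_le (n k : ℕ) :
    2 / ((n + 2 : ℕ) : ℝ) ^ (5 * (k + 1)) ≤ 1 / ((n + 2 : ℕ) : ℝ) ^ 2 * (1 / 2 / 2 ^ k) := by
  have hN : (2 : ℝ) ≤ (n + 2 : ℕ) := by exact_mod_cast Nat.le_add_left 2 n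
  generalize ((n + 2 : ℕ) : ℝ) = N at hN
  have hpow : N ^ 2 * 2 ^ (k + 2) ≤ N ^ (5 * (k + 1)) :=
    calc N ^ 2 * 2 ^ (k + 2) ≤ N ^ 2 * N ^ (k + 2) := by gcongr
      _ = N ^ (k + 4) := by ring
      _ ≤ N ^ (5 * (k + 1)) := pow_le_pow_right₀ (by linarith) (by omega)
  calc 2 / N ^ (5 * (k + 1)) ≤ 2 / (N ^ 2 * 2 ^ (k + 2)) := by gcongr
    _ = 1 / N ^ 2 * (1 / 2 / 2 ^ k) := by field_simp; ring

lemma tsum_ofReal_two_div_pow_lt_one :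
    ∑' p : ℕ × ℕ, ENNReal.ofReal (2 / ((p.1 + 2 : ℕ) : ℝ) ^ (5 * (p.2 + 1))) < 1 := by
  have hgeom : HasSum (fun k : ℕ ↦ (1 : ℝ) / 2 / 2 ^ k) 1 := hasSum_geometric_two' 1
  have hprod := hasSum_one_div_add_two_sq.mul hgeom <|
    hasSum_one_div_add_two_sq.summable.mul_of_nonneg hgeom.summable
      (fun _ ↦ by positivity) fun _ ↦ by positivity
  calc _ ≤ ∑' p : ℕ × ℕ, ENNReal.ofReal (1 / ((p.1 + 2 : ℕ) : ℝ) ^ 2 * (1 / 2 / 2 ^ p.2)) :=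
        ENNReal.tsum_le_tsum fun p ↦ ENNReal.ofReal_le_ofReal (two_div_pow_le p.1 p.2)
    _ = ENNReal.ofReal ((Real.pi ^ 2 / 6 - 1) * 1) := by
        rw [← ENNReal.ofReal_tsum_of_nonneg (fun _ ↦ by positivity) hprod.summable, hprod.tsum_eq]
    _ < 1 := by
        rw [ENNReal.ofReal_lt_one]
        nlinarith [Real.pi_lt_d2, Real.pi_pos]

lemma exists_forall_starDisc_blocks_le {X : ℕ → Ω → I} (hX : ∀ k, Measurable (X k))
    (hindep : iIndepFun X P) (hlaw : ∀ k, HasLaw (X k) volume P) :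
    ∃ ω, ∀ s N : ℕ, 1 ≤ s → 2 ≤ N →
      starDisc (blocks (fun k ↦ (X k ω : ℝ)) N s) ≤ 3 * discRate s N := by
  have := hindep.isProbabilityMeasure
  let bad (p : ℕ × ℕ) : Set Ω := {ω | 3 * discRate (p.2 + 1) (p.1 + 2) <
    starDisc (blocks (fun k ↦ (X k ω : ℝ)) (p.1 + 2) (p.2 + 1))}
  have hbad (p : ℕ × ℕ) :
      P (bad p) ≤ ENNReal.ofReal (2 / ((p.1 + 2 : ℕ) : ℝ) ^ (5 * (p.2 + 1))) := by
    rw [← ofReal_measureReal]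
    exact ENNReal.ofReal_le_ofReal <| measureReal_starDisc_gt_rate_le
      (iIndepFun_blocks hX hindep _ _) (hasLaw_blocks hindep hlaw) (by omega) (by omega)
  obtain ⟨ω, hω⟩ := exists_forall_notMem_of_tsum_measure_lt_one
    ((ENNReal.tsum_le_tsum hbad).trans_lt tsum_ofReal_two_div_pow_lt_one)
  refine ⟨ω, fun s N hs hN ↦ ?_⟩
  obtain ⟨k, rfl⟩ := Nat.exists_eq_add_of_le' hs
  obtain ⟨n, rfl⟩ := Nat.exists_eq_add_of_le' hN
  exact not_lt.1 (hω (n, k))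

end RandomSequence

/-- there is a constant `C > 0` and a sequence `(u_n)_{n≥1}` in `[0,1]`
such that for all `s ≥ 1` and `N ≥ 2` the point set of the `N` consecutive
non-overlapping blocks `u^{(s)}_n = (u_{(n−1)s+1}, …, u_{ns})`, `n = 1, …, N`, has
star-discrepancy at most `C √(s log N)/√N`.  (The point with index `n : Fin N`
corresponds to the block `u^{(s)}_{n+1}`, whose `j`-th coordinate, `j : Fin s`, is
`u (n s + j + 1)`.) -/
theorem exists_cud_sequence :
    ∃ C : ℝ, 0 < C ∧ ∃ u : ℕ → ℝ, (∀ n, u n ∈ Set.Icc (0:ℝ) 1) ∧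
      ∀ s N : ℕ, 1 ≤ s → 2 ≤ N →
        starDisc (fun (n : Fin N) (j : Fin s) => u (n.1 * s + j.1 + 1)) ≤
          C * Real.sqrt ((s : ℝ) * Real.log N) / Real.sqrt N := by
  obtain ⟨ω, hω⟩ := exists_forall_starDisc_blocks_le
    (P := Measure.infinitePi fun _ : ℕ ↦ (volume : Measure I)) (X := fun k ω ↦ ω k)
    (fun k ↦ measurable_pi_apply k) (iIndepFun_infinitePi fun _ ↦ measurable_id)
    fun k ↦ (measurePreserving_eval_infinitePi (fun _ ↦ volume) k).hasLaw
  refine ⟨3, three_pos, fun k ↦ ω k, fun k ↦ (ω k).2, fun s N hs hN ↦ ?_⟩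
  rw [mul_div_assoc]
  exact hω s N hs hN
end
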